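/- arXiv:1805.08965 — 5 statements merged into one kernel-verified Lean document; each statement's English description precedes it below -/
import Mathlib

section
/- Let Π be the HNN extension of a group G relative to an isomorphism φ between subgroups A and B of G. If A is an RS-subgroup of G or B is an RS-subgroup of G, then Π is a cut-group. -/
/-- A group `G` is a *cut-group* if every central unit of the integral group ring `ℤ[G]`
is trivial, i.e. of the form `±g` for some `g ∈ G`. -/
def IsCutGroup (G : Type*) [Group G] : Prop :=
  ∀ u : (MonoidAlgebra ℤ G)ˣ,
    (u : MonoidAlgebra ℤ G) ∈ Subring.center (MonoidAlgebra ℤ G) →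
    ∃ g : G, (u : MonoidAlgebra ℤ G) = MonoidAlgebra.of ℤ G g ∨
      (u : MonoidAlgebra ℤ G) = -(MonoidAlgebra.of ℤ G g)

/-- A torsion element `x` of a group `G` is an *RS-element* of `G` if for every positive
integer `j` coprime to the order of `x`, `x ^ j` is conjugate in `G` to `x` or to `x⁻¹`. -/
def IsRSElement {G : Type*} [Group G] (x : G) : Prop :=
  ∀ j : ℕ, 0 < j → Nat.Coprime j (orderOf x) → (IsConj (x ^ j) x ∨ IsConj (x ^ j) x⁻¹)

/-- A subgroup `A` of `G` is an *RS-subgroup* of `G` if every torsion element of `A`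
is an RS-element of `G`. -/
def IsRSSubgroup {G : Type*} [Group G] (A : Subgroup G) : Prop :=
  ∀ a ∈ A, IsOfFinOrder a → IsRSElement a


namespace CutHNN

open MonoidAlgebra

section Star
variable {D : Type*} [Group D]

/-- The classical involution of the integral group ring. -/
noncomputable def st (x : MonoidAlgebra ℤ D) : MonoidAlgebra ℤ D :=
  MonoidAlgebra.mapDomain (fun g : D => g⁻¹) x

lemma st_single (g : D) (r : ℤ) : st (single g r) = single g⁻¹ r := by
  simp [st]

lemma st_add (x y : MonoidAlgebra ℤ D) : st (x + y) = st x + st y := by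
  simp [st, mapDomain_add]

lemma st_zero : st (0 : MonoidAlgebra ℤ D) = 0 := by
  simp [st]

lemma st_one : st (1 : MonoidAlgebra ℤ D) = 1 := by
  simp [one_def, st_single]

lemma st_coeff (x : MonoidAlgebra ℤ D) (g : D) : (st x).coeff g = x.coeff g⁻¹ := by
  induction x using MonoidAlgebra.induction_linear with
  | zero => simp [st_zero]
  | add x y hx hy => simp [st_add, hx, hy]
  | single m r =>
    classical
    rw [st_single, coeff_single, coeff_single, Finsupp.single_apply, Finsupp.single_apply]
    simp [inv_eq_iff_eq_inv]

lemma st_st (x : MonoidAlgebra ℤ D) : st (st x) = x := by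
  ext g; simp [st_coeff]

lemma st_sub (x y : MonoidAlgebra ℤ D) : st (x - y) = st x - st y := by
  ext g; simp [st_coeff]

lemma st_mul (x y : MonoidAlgebra ℤ D) : st (x * y) = st y * st x := by
  induction x using MonoidAlgebra.induction_linear with
  | zero => simp [st_zero]
  | add x y hx hy => simp [st_add, add_mul, mul_add, hx, hy]
  | single m r =>
    induction y using MonoidAlgebra.induction_linear with
    | zero => simp [st_zero]
    | add x y hx hy => simp [st_add, add_mul, mul_add, hx, hy]
    | single k s => simp [st_single, single_mul_single, mul_comm]

lemma coeff_mul_one (x y : MonoidAlgebra ℤ D) :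
    (x * y).coeff 1 = ∑ g ∈ x.coeff.support, x.coeff g * y.coeff g⁻¹ := by
  classical
  rw [coeff_mul, Finsupp.sum]
  refine Finset.sum_congr rfl fun g _ => ?_
  rw [Finsupp.sum, Finset.sum_eq_single g⁻¹]
  · simp
  · intro b _ hb
    rw [if_neg]
    intro h
    exact hb (eq_inv_of_mul_eq_one_right h)
  · intro h
    simp only [Finsupp.mem_support_iff, not_not] at h
    simp [h]

lemma coeff_mul_st_one (x : MonoidAlgebra ℤ D) :
    (x * st x).coeff 1 = ∑ g ∈ x.coeff.support, x.coeff g ^ 2 := by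
  rw [coeff_mul_one]
  refine Finset.sum_congr rfl fun g _ => ?_
  rw [st_coeff, inv_inv, sq]

lemma sq_le_coeff_mul_st (x : MonoidAlgebra ℤ D) (g : D) :
    x.coeff g ^ 2 ≤ (x * st x).coeff 1 := by
  rw [coeff_mul_st_one]
  by_cases h : g ∈ x.coeff.support
  · exact Finset.single_le_sum (f := fun g => x.coeff g ^ 2) (fun i _ => sq_nonneg _) h
  · simp only [Finsupp.mem_support_iff, not_not] at h
    rw [h]
    simpa using Finset.sum_nonneg fun i _ => sq_nonneg (x.coeff i)

lemma sq_add_sq_le_coeff_mul_st (x : MonoidAlgebra ℤ D) {g k : D} (hgk : g ≠ k) :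
    x.coeff g ^ 2 + x.coeff k ^ 2 ≤ (x * st x).coeff 1 := by
  classical
  by_cases h : g ∈ x.coeff.support
  · by_cases h' : k ∈ x.coeff.support
    · rw [coeff_mul_st_one, ← Finset.sum_pair (f := fun g => x.coeff g ^ 2) hgk]
      refine Finset.sum_le_sum_of_subset_of_nonneg ?_ (fun i _ _ => sq_nonneg _)
      intro i hi
      simp only [Finset.mem_insert, Finset.mem_singleton] at hi
      rcases hi with rfl | rfl <;> assumption
    · simp only [Finsupp.mem_support_iff, not_not] at h'
      have := sq_le_coeff_mul_st x g
      simpa [h'] using this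
  · simp only [Finsupp.mem_support_iff, not_not] at h
    have := sq_le_coeff_mul_st x k
    simpa [h] using this

lemma eq_zero_of_mul_st {x : MonoidAlgebra ℤ D} (h : (x * st x).coeff 1 ≤ 0) : x = 0 := by
  ext g
  have := sq_le_coeff_mul_st x g
  have h2 : x.coeff g ^ 2 = 0 := le_antisymm (by linarith) (sq_nonneg _)
  simpa using h2

/-- an element with `(x x^*)_1 = 1` is a signed group element -/
lemma trivial_of_mul_st {x : MonoidAlgebra ℤ D} (h : (x * st x).coeff 1 = 1) :
    ∃ g : D, x = MonoidAlgebra.of ℤ D g ∨ x = -(MonoidAlgebra.of ℤ D g) := by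
  classical
  have hx : ∃ g, x.coeff g ≠ 0 := by
    by_contra! hc
    have : x = 0 := by ext g; simp [hc g]
    simp [this] at h
  obtain ⟨g, hg⟩ := hx
  have h1 : x.coeff g ^ 2 = 1 := by
    have h2 := sq_le_coeff_mul_st x g
    have h3 : 0 < x.coeff g ^ 2 := by positivity
    omega
  have h0 : ∀ k, g ≠ k → x.coeff k = 0 := by
    intro k hk
    have h2 := sq_add_sq_le_coeff_mul_st x hk
    have h3 := sq_nonneg (x.coeff k)
    have : x.coeff k ^ 2 = 0 := by omega
    simpa using this
  have hs : x = single g (x.coeff g) := by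
    ext k
    rw [coeff_single, Finsupp.single_apply]
    split_ifs with hk
    · rw [hk]
    · exact h0 k hk
  refine ⟨g, ?_⟩
  rcases mul_self_eq_one_iff.mp (by rw [← sq]; exact h1 : x.coeff g * x.coeff g = 1) with h | h
  · left; rw [hs, h]; rfl
  · right; rw [hs, h]; ext; simp

lemma mem_center_iff_coeff (x : MonoidAlgebra ℤ D) :
    x ∈ Subring.center (MonoidAlgebra ℤ D) ↔ ∀ g k, x.coeff (g * k * g⁻¹) = x.coeff k := by
  have key : ∀ g, single g (1:ℤ) * x = x * single g 1 ↔ ∀ k, x.coeff (g * k * g⁻¹) = x.coeff k := by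
    intro g
    have h1 : ∀ k, (single g (1:ℤ) * x).coeff k = x.coeff (g⁻¹ * k) := by
      intro k
      rw [coeff_single_mul_eq_mul_coeff (g⁻¹ * k), one_mul]
      intro m _
      rw [eq_inv_mul_iff_mul_eq]
    have h2 : ∀ k, (x * single g (1:ℤ)).coeff k = x.coeff (k * g⁻¹) := by
      intro k
      rw [coeff_mul_single_eq_coeff_mul (k * g⁻¹), mul_one]
      intro m _
      rw [eq_mul_inv_iff_mul_eq]
    constructor
    · intro h k
      have := h1 (g * k)
      rw [h, h2] at this
      simpa using this
    · intro h
      ext k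
      rw [h1, h2, ← h (g⁻¹ * k)]
      simp
  rw [Subring.mem_center_iff]
  constructor
  · intro h g
    exact (key g).1 (h _)
  · intro h y
    induction y using MonoidAlgebra.induction_on with
    | of m => exact (key m).2 (h m)
    | add a b ha hb => rw [add_mul, mul_add, ha, hb]
    | smul r a ha => rw [smul_mul_assoc, mul_smul_comm, ha]

lemma st_mem_center {x : MonoidAlgebra ℤ D} (hx : x ∈ Subring.center (MonoidAlgebra ℤ D)) :
    st x ∈ Subring.center (MonoidAlgebra ℤ D) := by
  rw [mem_center_iff_coeff] at hx ⊢
  intro g k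
  rw [st_coeff, st_coeff, ← hx g k⁻¹]
  simp [mul_assoc]

lemma eq_zero_of_sq_eq_zero {x : MonoidAlgebra ℤ D}
    (hx : x ∈ Subring.center (MonoidAlgebra ℤ D)) (h : x * x = 0) : x = 0 := by
  have hc := Subring.mem_center_iff.1 hx
  have hy : (x * st x) * st (x * st x) = 0 := by
    rw [st_mul, st_st]
    have : x * st x * (x * st x) = (x * x) * (st x * st x) := by
      rw [mul_assoc, ← mul_assoc (st x) x, hc (st x)]
      simp only [mul_assoc]
    rw [this, h, zero_mul]
  have h1 : x * st x = 0 := eq_zero_of_mul_st (by rw [hy]; simp)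
  exact eq_zero_of_mul_st (by rw [h1]; simp)

instance center_isReduced : IsReduced (Subring.center (MonoidAlgebra ℤ D)) := by
  refine (isReduced_iff_pow_one_lt 2 (by norm_num)).2 ?_
  intro x hx
  have : (x : MonoidAlgebra ℤ D) * x = 0 := by
    have := congrArg (Subtype.val) hx
    simpa [sq] using this
  exact Subtype.ext (eq_zero_of_sq_eq_zero x.2 this)

lemma idempotent_trivial {e : MonoidAlgebra ℤ D}
    (hx : e ∈ Subring.center (MonoidAlgebra ℤ D)) (h : e * e = e) : e = 0 ∨ e = 1 := by
  have hc := Subring.mem_center_iff.1 hx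
  have hs : st e * st e = st e := by rw [← st_mul, h]
  have hcomm : st e * e = e * st e := hc _
  -- `f = e - e e^*`
  have hf : (e - e * st e) * st (e - e * st e) = 0 := by
    rw [st_sub, st_mul, st_st, mul_sub, sub_mul, sub_mul]
    have h1 : e * st e * st e = e * st e := by rw [mul_assoc, hs]
    have h2 : e * (e * st e) = e * st e := by rw [← mul_assoc, h]
    have h3 : e * st e * (e * st e) = e * st e := by
      rw [mul_assoc, ← mul_assoc (st e), hcomm, h1, h2]
    rw [h1, h2, h3]
    simp
  have h1 : e - e * st e = 0 := eq_zero_of_mul_st (by rw [hf]; simp)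
  have h2 : e * st e = e := (sub_eq_zero.1 h1).symm
  have h3 := sq_le_coeff_mul_st e 1
  rw [h2] at h3
  have h4 : e.coeff 1 = 0 ∨ e.coeff 1 = 1 := by
    have : 0 ≤ e.coeff 1 := le_trans (sq_nonneg _) h3
    have : e.coeff 1 ≤ 1 := by nlinarith
    omega
  rcases h4 with h4 | h4
  · left
    exact eq_zero_of_mul_st (by rw [h2, h4])
  · right
    have h0 : ∀ k, (1:D) ≠ k → e.coeff k = 0 := by
      intro k hk
      have h5 := sq_add_sq_le_coeff_mul_st e hk
      rw [h2, h4] at h5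
      have h3 := sq_nonneg (e.coeff k)
      have : e.coeff k ^ 2 = 0 := by omega
      simpa using this
    classical
    ext k
    rw [one_def, coeff_single, Finsupp.single_apply]
    split_ifs with hk
    · rw [← hk, h4]
    · exact h0 k hk

end Star

end CutHNN


namespace CutHNN

open MonoidAlgebra

section Graded

lemma twoUnique (Q : Type*) [CommGroup Q] [IsMulTorsionFree Q] : TwoUniqueProds Q := by
  have h1 : TwoUniqueSums (Additive Q) :=
    TwoUniqueSums.of_injective_addHom
      (DivisibleHull.coeAddMonoidHom (Additive Q)).toAddHom DivisibleHull.coe_injective inferInstance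
  exact Multiplicative.instTwoUniqueProdsOfTwoUniqueSums (M := Additive Q)

lemma coeff_mul_eq_zero_of_domain {Z Q : Type*} [CommRing Z] [IsDomain Z] [CommGroup Q]
    [TwoUniqueProds Q] {U V : MonoidAlgebra Z Q} (h : U * V = 1) {a b : Q} (hab : a * b ≠ 1) :
    U.coeff a * V.coeff b = 0 := by
  classical
  by_contra hne
  have ha : a ∈ U.coeff.support := by
    rw [Finsupp.mem_support_iff]; intro h0; simp [h0] at hne
  have hb : b ∈ V.coeff.support := by
    rw [Finsupp.mem_support_iff]; intro h0; simp [h0] at hne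
  have hu : ∀ p ∈ U.coeff.support ×ˢ V.coeff.support,
      UniqueMul U.coeff.support V.coeff.support p.1 p.2 → p.1 * p.2 = 1 := by
    intro p hp hpu
    by_contra hp1
    have h1 : (U * V).coeff (p.1 * p.2) = U.coeff p.1 * V.coeff p.2 :=
      MonoidAlgebra.coeff_mul_mul_of_uniqueMul hpu
    rw [h, one_def, coeff_single, Finsupp.single_apply, if_neg (Ne.symm hp1)] at h1
    simp only [Finset.mem_product, Finsupp.mem_support_iff] at hp
    exact mul_ne_zero hp.1 hp.2 h1.symm
  by_cases hc : 1 < U.coeff.support.card * V.coeff.support.card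
  · obtain ⟨p, hp, p', hp', hpp, h1, h2⟩ := TwoUniqueProds.uniqueMul_of_one_lt_card hc
    apply hpp
    have e1 := hu p hp h1
    have e2 := hu p' hp' h2
    have hp0 := Finset.mem_product.1 hp
    have hp0' := Finset.mem_product.1 hp'
    obtain ⟨e3, e4⟩ := h2 hp0.1 hp0.2 (e1.trans e2.symm)
    exact Prod.ext e3 e4
  · have hca : 0 < U.coeff.support.card := Finset.card_pos.2 ⟨a, ha⟩
    have hcb : 0 < V.coeff.support.card := Finset.card_pos.2 ⟨b, hb⟩
    have h1 : U.coeff.support.card ≤ 1 := by nlinarith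
    have h2 : V.coeff.support.card ≤ 1 := by nlinarith
    refine hab (hu (a, b) (Finset.mem_product.2 ⟨ha, hb⟩) ?_)
    intro x y hx hy _
    exact ⟨Finset.card_le_one.1 h1 _ hx _ ha, Finset.card_le_one.1 h2 _ hy _ hb⟩

lemma coeff_mul_eq_zero_of_reduced {Z Q : Type*} [CommRing Z] [IsReduced Z] [CommGroup Q]
    [TwoUniqueProds Q] {U V : MonoidAlgebra Z Q} (h : U * V = 1) {a b : Q} (hab : a * b ≠ 1) :
    U.coeff a * V.coeff b = 0 := by
  have : U.coeff a * V.coeff b ∈ nilradical Z := by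
    rw [nilradical_eq_sInf, Ideal.mem_sInf]
    intro P hP
    have hP' : P.IsPrime := hP
    have h1 : mapRingHom Q (Ideal.Quotient.mk P) U * mapRingHom Q (Ideal.Quotient.mk P) V = 1 := by
      rw [← map_mul, h, map_one]
    have h2 := coeff_mul_eq_zero_of_domain h1 hab
    rw [coeff_mapRingHom, coeff_mapRingHom, ← map_mul] at h2
    exact Ideal.Quotient.eq_zero_iff_mem.1 h2
  rw [nilradical_eq_zero] at this
  exact this

variable {D Q : Type*} [Group D] [CommGroup Q]

/-- the coaction attached to the grading -/
noncomputable def coact (q : D →* Q) :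
    MonoidAlgebra ℤ D →+* MonoidAlgebra (MonoidAlgebra ℤ D) Q :=
  MonoidAlgebra.liftNCRingHom (Int.castRingHom _)
    { toFun := fun g => single (q g) (single g 1)
      map_one' := by simp [one_def]
      map_mul' := by intro a b; simp [single_mul_single] }
    (fun r _ => Int.cast_commute r _)

lemma coact_single (q : D →* Q) (g : D) (r : ℤ) :
    coact q (single g r) = single (q g) (single g r) := by
  have : (coact q) (single g r) = (r : MonoidAlgebra (MonoidAlgebra ℤ D) Q) *
    single (q g) (single g 1) := by
    simp [coact, liftNCRingHom]
  rw [this, ← zsmul_eq_mul, smul_single, smul_single]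
  simp

lemma coact_coeff (q : D →* Q) (x : MonoidAlgebra ℤ D) (h : Q) (g : D) [Decidable (q g = h)] :
    ((coact q x).coeff h).coeff g = if q g = h then x.coeff g else 0 := by
  classical
  induction x using MonoidAlgebra.induction_linear with
  | zero => simp
  | add x y hx hy => simp only [map_add, coeff_add, Finsupp.add_apply, hx, hy]; split_ifs <;> simp
  | single m r =>
    rw [coact_single, coeff_single, coeff_single, Finsupp.single_apply, Finsupp.single_apply]
    by_cases hm : m = g
    · subst hm
      rw [if_pos rfl]
      split_ifs <;> simp
    · rw [if_neg hm]
      split_ifs <;> simp [hm]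

lemma coact_coeff_center (q : D →* Q) {x : MonoidAlgebra ℤ D}
    (hx : x ∈ Subring.center (MonoidAlgebra ℤ D)) (h : Q) :
    (coact q x).coeff h ∈ Subring.center (MonoidAlgebra ℤ D) := by
  classical
  rw [mem_center_iff_coeff] at hx ⊢
  intro g k
  rw [coact_coeff, coact_coeff, hx]
  have : q (g * k * g⁻¹) = q k := by
    rw [map_mul, map_mul, map_inv, mul_comm, inv_mul_cancel_left]
  rw [this]

theorem unit_homogeneous [TwoUniqueProds Q] (q : D →* Q) {u v : MonoidAlgebra ℤ D}
    (hu : u ∈ Subring.center (MonoidAlgebra ℤ D)) (hv : v ∈ Subring.center (MonoidAlgebra ℤ D))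
    (huv : u * v = 1) :
    ∃ h : Q, (∀ g, u.coeff g ≠ 0 → q g = h) ∧ (∀ g, v.coeff g ≠ 0 → q g = h⁻¹) := by
  classical
  let Z := Subring.center (MonoidAlgebra ℤ D)
  have lft : ∀ x ∈ Z, ∃ U : MonoidAlgebra Z Q, mapRingHom Q Z.subtype U = coact q x := by
    intro x hx
    have : coact q x ∈ Set.range (MonoidAlgebra.map (M := Q) (Z.subtype : Z →+ MonoidAlgebra ℤ D)) := by
      rw [range_map]
      intro i
      exact ⟨⟨_, coact_coeff_center q hx i⟩, rfl⟩
    obtain ⟨U, hU⟩ := this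
    exact ⟨U, hU⟩
  obtain ⟨U, hU⟩ := lft u hu
  obtain ⟨V, hV⟩ := lft v hv
  have hinj : Function.Injective (mapRingHom Q Z.subtype) :=
    MonoidAlgebra.map_injective (Z.subtype : Z →+ MonoidAlgebra ℤ D) Subtype.val_injective
  have hUV : U * V = 1 := by
    apply hinj
    rw [map_mul, hU, hV, ← map_mul, huv, map_one, map_one]
  have hz : ∀ a b, a * b ≠ 1 → U.coeff a * V.coeff b = 0 :=
    fun a b hab => coeff_mul_eq_zero_of_reduced hUV hab
  have hsum : ∑ a ∈ U.coeff.support, U.coeff a * V.coeff a⁻¹ = 1 := by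
    have : (U * V).coeff 1 = 1 := by rw [hUV, coeff_one_one]
    rw [← this, coeff_mul, Finsupp.sum]
    refine Finset.sum_congr rfl fun g _ => ?_
    rw [Finsupp.sum, Finset.sum_eq_single g⁻¹]
    · simp
    · intro b _ hb
      rw [if_neg]
      intro h
      exact hb (eq_inv_of_mul_eq_one_right h)
    · intro h
      simp only [Finsupp.mem_support_iff, not_not] at h
      simp [h]
  have hidem : ∀ a ∈ U.coeff.support, U.coeff a * V.coeff a⁻¹ = 0 ∨ U.coeff a * V.coeff a⁻¹ = 1 := by
    intro a ha
    have h1 : (U.coeff a * V.coeff a⁻¹) * (U.coeff a * V.coeff a⁻¹) = U.coeff a * V.coeff a⁻¹ := by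
      conv_rhs => rw [← mul_one (U.coeff a * V.coeff a⁻¹), ← hsum, Finset.mul_sum]
      rw [Finset.sum_eq_single a]
      · intro b _ hb
        have := hz b a⁻¹ (by rwa [Ne, mul_inv_eq_one])
        rw [mul_mul_mul_comm, mul_comm (V.coeff a⁻¹), mul_assoc, mul_comm (V.coeff b⁻¹), ← mul_assoc (U.coeff b),
          this]
        simp
      · intro h; exact absurd ha h
    rcases idempotent_trivial (U.coeff a * V.coeff a⁻¹).2 (congrArg Subtype.val h1) with h | h
    · left; exact Subtype.ext h
    · right; exact Subtype.ext h
  have hex : ∃ a, U.coeff a * V.coeff a⁻¹ = 1 := by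
    by_contra! hne
    have : ∑ a ∈ U.coeff.support, U.coeff a * V.coeff a⁻¹ = 0 :=
      Finset.sum_eq_zero fun a ha => (hidem a ha).resolve_right (hne a)
    rw [this] at hsum
    exact zero_ne_one hsum
  obtain ⟨a, ha⟩ := hex
  have hUz : ∀ b, b ≠ a → U.coeff b = 0 := by
    intro b hb
    rw [← mul_one (U.coeff b), ← ha, mul_comm (U.coeff a), ← mul_assoc,
      hz b a⁻¹ (by rwa [Ne, mul_inv_eq_one]), zero_mul]
  have hVz : ∀ b, b ≠ a⁻¹ → V.coeff b = 0 := by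
    intro b hb
    rw [← one_mul (V.coeff b), ← ha, mul_assoc, mul_comm (V.coeff a⁻¹), ← mul_assoc,
      hz a b (by intro h; exact hb (eq_inv_of_mul_eq_one_right h)), zero_mul]
  refine ⟨a, ?_, ?_⟩
  · intro g hg
    by_contra hne
    apply hg
    have h1 := coact_coeff q u (q g) g
    rw [if_pos rfl, ← hU, coeff_mapRingHom, hUz _ hne] at h1
    rw [← h1]; simp
  · intro g hg
    by_contra hne
    apply hg
    have h1 := coact_coeff q v (q g) g
    rw [if_pos rfl, ← hV, coeff_mapRingHom, hVz _ hne] at h1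
    rw [← h1]; simp

end Graded

end CutHNN


namespace CutHNN

section FC
variable {Γ : Type*} [Group Γ]

/-- the FC-center -/
def fcCenter (Γ : Type*) [Group Γ] : Subgroup Γ where
  carrier := {x | (Subgroup.centralizer {x}).FiniteIndex}
  one_mem' := by
    have : Subgroup.centralizer {(1 : Γ)} = ⊤ := by
      ext x; simp [Subgroup.mem_centralizer_iff]
    simp only [Set.mem_ofPred_eq, this]
    infer_instance
  mul_mem' := by
    intro a b ha hb
    simp only [Set.mem_ofPred_eq] at ha hb ⊢
    have : Subgroup.centralizer {a} ⊓ Subgroup.centralizer {b} ≤ Subgroup.centralizer {a * b} := by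
      intro x hx
      simp only [Subgroup.mem_inf, Subgroup.mem_centralizer_singleton_iff] at hx ⊢
      rw [mul_assoc, ← hx.2, ← mul_assoc, hx.1, mul_assoc]
    exact Subgroup.finiteIndex_of_le this
  inv_mem' := by
    intro a ha
    simp only [Set.mem_ofPred_eq] at ha ⊢
    have : Subgroup.centralizer {a} ≤ Subgroup.centralizer {a⁻¹} := by
      intro x hx
      simp only [Subgroup.mem_centralizer_singleton_iff] at hx ⊢
      rw [eq_inv_mul_iff_mul_eq, ← mul_assoc, ← hx, mul_inv_cancel_right]
    exact Subgroup.finiteIndex_of_le this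

lemma mem_fcCenter {x : Γ} : x ∈ fcCenter Γ ↔ (Subgroup.centralizer {x}).FiniteIndex := Iff.rfl

lemma mem_fcCenter_iff {x : Γ} : x ∈ fcCenter Γ ↔ (Set.range fun g : Γ => g * x * g⁻¹).Finite := by
  have key : ∀ a b : Γ, a * x * a⁻¹ = b * x * b⁻¹ ↔ a⁻¹ * b ∈ Subgroup.centralizer {x} := by
    intro a b
    rw [Subgroup.mem_centralizer_singleton_iff]
    constructor
    · intro h
      have : a * x * a⁻¹ * b = b * x := by rw [h]; group
      calc a⁻¹ * b * x = a⁻¹ * (b * x) := by group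
        _ = x * (a⁻¹ * b) := by rw [← this]; group
    · intro h
      have : a * (a⁻¹ * b * x) * b⁻¹ = a * (x * (a⁻¹ * b)) * b⁻¹ := by rw [h]
      calc a * x * a⁻¹ = a * (x * (a⁻¹ * b)) * b⁻¹ := by group
        _ = b * x * b⁻¹ := by rw [← this]; group
  let f : Γ ⧸ Subgroup.centralizer {x} → Γ := Quotient.lift (fun g => g * x * g⁻¹) (by
    intro a b h
    exact (key a b).2 (QuotientGroup.leftRel_apply.1 h))
  have hf : Set.range f = Set.range fun g : Γ => g * x * g⁻¹ := by
    ext y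
    constructor
    · rintro ⟨c, rfl⟩
      obtain ⟨g, rfl⟩ := QuotientGroup.mk_surjective c
      exact ⟨g, rfl⟩
    · rintro ⟨g, rfl⟩
      exact ⟨QuotientGroup.mk g, rfl⟩
  have hinj : Function.Injective f := by
    intro c d h
    obtain ⟨a, rfl⟩ := QuotientGroup.mk_surjective c
    obtain ⟨b, rfl⟩ := QuotientGroup.mk_surjective d
    exact QuotientGroup.eq.2 ((key a b).1 h)
  rw [mem_fcCenter, ← hf]
  constructor
  · intro h
    have : Finite (Γ ⧸ Subgroup.centralizer {x}) := inferInstance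
    exact Set.finite_range f
  · intro h
    have : Finite (Γ ⧸ Subgroup.centralizer {x}) := by
      have := h.to_subtype
      exact Finite.of_injective (Set.rangeFactorization f)
        (Set.rangeFactorization_injective.2 hinj)
    exact Subgroup.finiteIndex_of_finite_quotient

lemma conj_mem_fcCenter {x : Γ} (hx : x ∈ fcCenter Γ) (g : Γ) : g * x * g⁻¹ ∈ fcCenter Γ := by
  rw [mem_fcCenter_iff] at hx ⊢
  refine hx.subset ?_
  rintro _ ⟨h, rfl⟩
  exact ⟨h * g, by simp [mul_assoc]⟩

lemma center_finiteIndex {S : Set Γ} (hS : S.Finite) (h : S ⊆ fcCenter Γ) :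
    (Subgroup.center (Subgroup.closure S)).FiniteIndex := by
  have h1 : (Subgroup.centralizer S).FiniteIndex := by
    have : Subgroup.centralizer S = ⨅ s : S, Subgroup.centralizer {(s : Γ)} := by
      ext x
      simp [Subgroup.mem_iInf, Subgroup.mem_centralizer_iff]
    rw [this]
    have := hS.to_subtype
    exact Subgroup.finiteIndex_iInf fun s => h s.2
  have h2 : ((Subgroup.centralizer S).subgroupOf (Subgroup.closure S)).FiniteIndex := inferInstance
  refine Subgroup.finiteIndex_of_le (H := (Subgroup.centralizer S).subgroupOf (Subgroup.closure S)) ?_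
  intro x hx
  rw [Subgroup.mem_subgroupOf, ← Subgroup.centralizer_closure] at hx
  rw [Subgroup.mem_center_iff]
  intro g
  exact Subtype.ext (hx g g.2)

lemma pow_index_eq_one {K : Type*} [Group K] [(Subgroup.center K).FiniteIndex] {x : K}
    (hx : x ∈ commutator K) : x ^ (Subgroup.center K).index = 1 := by
  have hle : commutator K ≤ (MonoidHom.transferCenterPow K).ker := by
    rw [commutator_def, Subgroup.commutator_le]
    intro a _ b _
    rw [MonoidHom.mem_ker, map_commutatorElement, commutatorElement_eq_one_iff_mul_comm]
    exact Subtype.ext (Subgroup.mem_center_iff.1 (MonoidHom.transferCenterPow K b).2 _)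
  have := hle hx
  rw [MonoidHom.mem_ker] at this
  have := congrArg Subtype.val this
  simpa using this

lemma exists_finite_commutator {x : Γ} (hx : x ∈ ⁅fcCenter Γ, fcCenter Γ⁆) :
    ∃ S : Set Γ, S.Finite ∧ S ⊆ fcCenter Γ ∧ x ∈ ⁅Subgroup.closure S, Subgroup.closure S⁆ := by
  rw [Subgroup.commutator_def] at hx
  induction hx using Subgroup.closure_induction with
  | mem x hx =>
    obtain ⟨a, ha, b, hb, rfl⟩ := hx
    refine ⟨{a, b}, by simp, ?_, ?_⟩
    · rintro y (rfl | rfl) <;> assumption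
    · exact Subgroup.commutator_mem_commutator (Subgroup.subset_closure (by simp))
        (Subgroup.subset_closure (by simp))
  | one => exact ⟨∅, by simp, by simp, Subgroup.one_mem _⟩
  | mul x y _ _ hx hy =>
    obtain ⟨S, h1, h2, h3⟩ := hx
    obtain ⟨T, h4, h5, h6⟩ := hy
    have a1 := Subgroup.closure_mono (Set.subset_union_left (s := S) (t := T))
    have a2 := Subgroup.closure_mono (Set.subset_union_right (s := S) (t := T))
    exact ⟨S ∪ T, h1.union h4, Set.union_subset h2 h5,
      Subgroup.mul_mem _ (Subgroup.commutator_mono a1 a1 h3) (Subgroup.commutator_mono a2 a2 h6)⟩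
  | inv x _ hx =>
    obtain ⟨S, h1, h2, h3⟩ := hx
    exact ⟨S, h1, h2, Subgroup.inv_mem _ h3⟩

lemma isOfFinOrder_of_commutator {x : Γ} (hx : x ∈ ⁅fcCenter Γ, fcCenter Γ⁆) : IsOfFinOrder x := by
  obtain ⟨S, h1, h2, h3⟩ := exists_finite_commutator hx
  rw [← Subgroup.map_subtype_commutator] at h3
  obtain ⟨y, hy, rfl⟩ := h3
  have := center_finiteIndex h1 h2
  rw [isOfFinOrder_iff_pow_eq_one]
  refine ⟨_, Nat.pos_of_ne_zero (Subgroup.FiniteIndex.index_ne_zero (H := Subgroup.center (Subgroup.closure S))), ?_⟩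
  rw [← map_pow, pow_index_eq_one hy, map_one]

/-- the torsion-free abelian quotient of the FC-center -/
abbrev QT (Γ : Type*) [Group Γ] : Type _ :=
  Abelianization (fcCenter Γ) ⧸ CommGroup.torsion (Abelianization (fcCenter Γ))

/-- the quotient map -/
def qt (Γ : Type*) [Group Γ] : fcCenter Γ →* QT Γ :=
  (QuotientGroup.mk' _).comp Abelianization.of

lemma qt_eq_one_iff (x : fcCenter Γ) : qt Γ x = 1 ↔ IsOfFinOrder (x : Γ) := by
  constructor
  · intro h
    have h1 : Abelianization.of x ∈ CommGroup.torsion (Abelianization (fcCenter Γ)) :=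
      (QuotientGroup.eq_one_iff _).1 h
    obtain ⟨n, hn, h2⟩ := isOfFinOrder_iff_pow_eq_one.1 h1
    rw [← map_pow, ← MonoidHom.mem_ker, Abelianization.ker_of] at h2
    have h3 : ((x ^ n : fcCenter Γ) : Γ) ∈ ⁅fcCenter Γ, fcCenter Γ⁆ := by
      rw [← Subgroup.map_subtype_commutator]
      exact ⟨_, h2, rfl⟩
    have h4 := isOfFinOrder_of_commutator h3
    rw [Subgroup.coe_pow] at h4
    exact (isOfFinOrder_pow.1 h4).resolve_right hn.ne'
  · intro h
    have h1 : IsOfFinOrder x := Submonoid.isOfFinOrder_coe.1 h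
    refine (QuotientGroup.eq_one_iff _).2 ?_
    exact MonoidHom.isOfFinOrder Abelianization.of h1

/-- Lemma of Dietzmann -/
lemma finite_closure {S : Set Γ} (hS : S.Finite) (h : S ⊆ fcCenter Γ)
    (ht : ∀ x ∈ S, IsOfFinOrder x) : Finite (Subgroup.closure S) := by
  have hle : Subgroup.closure S ≤ (qt Γ).ker.map (fcCenter Γ).subtype := by
    rw [Subgroup.closure_le]
    intro x hx
    exact ⟨⟨x, h hx⟩, (qt_eq_one_iff _).2 (ht x hx), rfl⟩
  have htor : ∀ x ∈ Subgroup.closure S, IsOfFinOrder x := by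
    intro x hx
    obtain ⟨y, hy, rfl⟩ := hle hx
    exact (qt_eq_one_iff y).1 hy
  have := center_finiteIndex hS h
  have hfg : Group.FG (Subgroup.closure S) := by
    rw [Group.fg_iff_subgroup_fg]
    exact ⟨hS.toFinset, by simp⟩
  have hfg2 : Group.FG (Subgroup.center (Subgroup.closure S)) := by
    exact Subgroup.fg_of_index_ne_zero _
  have hfin : Finite (Subgroup.center (Subgroup.closure S)) := by
    have : IsMulTorsion (Subgroup.center (Subgroup.closure S)) := by
      intro x
      exact Submonoid.isOfFinOrder_coe.1 (Submonoid.isOfFinOrder_coe.1 (htor x.1 x.1.2))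
    let _ : CommGroup (Subgroup.center (Subgroup.closure S)) :=
      { (inferInstance : Group (Subgroup.center (Subgroup.closure S))) with
        mul_comm := fun a b => Subtype.ext (Subgroup.mem_center_iff.1 b.2 _) }
    exact CommGroup.finite_of_fg_isMulTorsion _ this
  exact (Subgroup.finite_iff_finite_and_finiteIndex (Subgroup.center (Subgroup.closure S))).2
    ⟨hfin, this⟩

lemma normal_closure_of_conj {S : Set Γ} (h : ∀ x ∈ S, ∀ g, g * x * g⁻¹ ∈ S) :
    (Subgroup.closure S).Normal := by
  have : Subgroup.closure S = Subgroup.normalClosure S := by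
    apply le_antisymm Subgroup.closure_le_normalClosure
    rw [Subgroup.normalClosure]
    apply Subgroup.closure_mono
    intro x hx
    rw [Group.mem_conjugatesOfSet_iff] at hx
    obtain ⟨a, ha, hc⟩ := hx
    obtain ⟨c, rfl⟩ := isConj_iff.1 hc
    exact h a ha c
  rw [this]
  infer_instance

end FC

end CutHNN


namespace CutHNN

open MonoidAlgebra

section Fin

variable {L : Type*} [Field L] [CharZero L] [IsAlgClosed L]

lemma exists_galois_exponent (σ : L →+* L) (n : ℕ) (hn : 0 < n) :
    ∃ j : ℕ, 0 < j ∧ Nat.Coprime j n ∧ ∀ z : L, z ^ n = 1 → σ z = z ^ j := by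
  have : NeZero n := ⟨hn.ne'⟩
  obtain ⟨ζ, hζ⟩ := HasEnoughRootsOfUnity.exists_primitiveRoot L n
  have h1 : IsPrimitiveRoot (σ ζ) n := hζ.map_of_injective σ.injective
  obtain ⟨i, hi, h2⟩ := hζ.eq_pow_of_pow_eq_one h1.pow_eq_one
  have h3 : i.Coprime n := (hζ.pow_iff_coprime hn i).1 (h2 ▸ h1)
  refine ⟨i + n, by omega, by simpa using h3, ?_⟩
  intro z hz
  obtain ⟨k, hk, rfl⟩ := hζ.eq_pow_of_pow_eq_one hz
  rw [map_pow, ← h2, pow_add, hz, mul_one, ← pow_mul, ← pow_mul, mul_comm]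

lemma trace_pow_eq {V : Type*} [AddCommGroup V] [Module L V] [FiniteDimensional L V]
    (f : Module.End L V) {n : ℕ} (hn : 0 < n) (hf : f ^ n = 1) :
    ∃ (s : Finset L) (d : L → ℕ), (∀ z ∈ s, z ^ n = 1) ∧
      ∀ j : ℕ, LinearMap.trace L V (f ^ j) = ∑ z ∈ s, z ^ j * (d z : L) := by
  classical
  have hss : f.IsSemisimple := by
    refine Module.End.isSemisimple_of_squarefree_aeval_eq_zero
      (p := (Polynomial.X ^ n - 1 : Polynomial L)) ?_ (by simp [hf])
    have := Polynomial.separable_X_pow_sub_C (1 : L) (n := n) (by exact_mod_cast hn.ne') one_ne_zero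
    rw [map_one] at this
    exact this.squarefree
  have hinteg : DirectSum.IsInternal (fun z : L => f.eigenspace z) :=
    DirectSum.isInternal_submodule_of_iSupIndep_of_iSup_eq_top
      f.eigenspaces_iSupIndep hss.iSup_eigenspace_eq_top
  have hfin : {z : L | f.eigenspace z ≠ ⊥}.Finite :=
    WellFoundedGT.finite_ne_bot_of_iSupIndep f.eigenspaces_iSupIndep
  have hpow : ∀ (j : ℕ) (z : L) (v : V), v ∈ f.eigenspace z → (f ^ j) v = z ^ j • v := by
    intro j z v hv
    rw [Module.End.mem_eigenspace_iff] at hv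
    induction j with
    | zero => simp
    | succ j ih => rw [pow_succ', Module.End.mul_apply, ih, map_smul, hv, smul_smul, pow_succ]
  have hmap : ∀ j : ℕ, ∀ z : L, Set.MapsTo (f ^ j) (f.eigenspace z) (f.eigenspace z) := by
    intro j z v hv
    rw [hpow j z v hv]
    exact Submodule.smul_mem _ _ hv
  refine ⟨hfin.toFinset, fun z => Module.finrank L (f.eigenspace z), ?_, ?_⟩
  · intro z hz
    have hz' : f.eigenspace z ≠ ⊥ := by simpa using hz
    obtain ⟨v, hv, hv0⟩ := Submodule.exists_mem_ne_zero_of_ne_bot hz'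
    have h1 := hpow n z v hv
    rw [hf, Module.End.one_apply] at h1
    have h2 : (z ^ n - 1) • v = 0 := by rw [sub_smul, one_smul, ← h1, sub_self]
    rcases smul_eq_zero.1 h2 with h | h
    · exact sub_eq_zero.1 h
    · exact absurd h hv0
  · intro j
    rw [LinearMap.trace_eq_sum_trace_restrict' hinteg hfin (hmap j)]
    refine Finset.sum_congr rfl fun z _ => ?_
    have : (f ^ j).restrict (hmap j z) = z ^ j • (1 : Module.End L (f.eigenspace z)) := by
      refine LinearMap.ext fun v => Subtype.ext ?_
      exact hpow j z v v.2
    rw [this, map_smul, LinearMap.trace_one, smul_eq_mul]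

lemma galois_trace {V : Type*} [AddCommGroup V] [Module L V] [FiniteDimensional L V]
    (f : Module.End L V) {n : ℕ} (hn : 0 < n) (hf : f ^ n = 1) (σ : L →+* L) {j : ℕ}
    (hj : ∀ z : L, z ^ n = 1 → σ z = z ^ j) :
    σ (LinearMap.trace L V f) = LinearMap.trace L V (f ^ j) := by
  obtain ⟨s, d, hs, h⟩ := trace_pow_eq f hn hf
  have h1 := h 1
  rw [pow_one] at h1
  rw [h1, h j, map_sum]
  refine Finset.sum_congr rfl fun z hz => ?_
  rw [map_mul, pow_one, map_natCast, hj z (hs z hz)]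

variable {N : Type*} [Group N] [Finite N]

/-- left multiplication representation of the integral group ring -/
noncomputable def lrep (L : Type*) [Field L] (N : Type*) [Group N] :
    MonoidAlgebra ℤ N →+* Module.End L (MonoidAlgebra L N) :=
  (Algebra.lmul L (MonoidAlgebra L N)).toRingHom.comp (mapRingHom N (Int.castRingHom L))

lemma lrep_injective : Function.Injective (lrep L N) := by
  intro x y h
  have h1 := congrArg (fun f : Module.End L (MonoidAlgebra L N) => f 1) h
  simp only [lrep, RingHom.comp_apply] at h1
  have h2 : mapRingHom N (Int.castRingHom L) x = mapRingHom N (Int.castRingHom L) y := by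
    simpa using h1
  exact MonoidAlgebra.map_injective ((Int.castRingHom L : ℤ →+* L) : ℤ →+ L) Int.cast_injective h2

lemma eq_sum_single [Fintype N] (w : MonoidAlgebra ℤ N) :
    w = ∑ x : N, (w.coeff x) • (single x (1 : ℤ)) := by
  classical
  ext g
  simp

lemma eigenvalue_fixed {w : MonoidAlgebra ℤ N} (hw : w ∈ Subring.center (MonoidAlgebra ℤ N))
    (hj : ∀ (x : N) (j : ℕ), 0 < j → j.Coprime (Nat.card N) → w.coeff (x ^ j) = w.coeff x)
    {l : L} (hl : (lrep L N w).HasEigenvalue l) (σ : L →+* L) : σ l = l := by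
  classical
  have := Fintype.ofFinite N
  have hn : 0 < Nat.card N := Nat.card_pos
  obtain ⟨j, hj0, hjc, hjs⟩ := exists_galois_exponent σ (Nat.card N) hn
  set ρ : N → Module.End L (MonoidAlgebra L N) := fun x => lrep L N (single x 1) with hρ
  set E := (lrep L N w).eigenspace l with hE
  have hcomm : ∀ x, Commute (lrep L N w) (ρ x) := by
    intro x
    have := Subring.mem_center_iff.1 hw (single x 1)
    change lrep L N w * lrep L N (single x 1) = lrep L N (single x 1) * lrep L N w
    rw [← map_mul, ← map_mul, this]
  have hmap : ∀ x, ∀ v ∈ E, ρ x v ∈ E := by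
    intro x v hv
    have hv' : (lrep L N w) v = l • v := Module.End.mem_eigenspace_iff.1 hv
    refine Module.End.mem_eigenspace_iff.2 ?_
    have := congrArg (fun f : Module.End L (MonoidAlgebra L N) => f v) (hcomm x).eq
    simp only [Module.End.mul_apply] at this
    rw [this, hv', map_smul]
  set τ : N → Module.End L E := fun x => (ρ x).restrict (hmap x) with hτ
  have hρpow : ∀ x (k : ℕ), (ρ x) ^ k = ρ (x ^ k) := by
    intro x k
    simp only [hρ]
    rw [← map_pow, single_pow, one_pow]
  have hτpow : ∀ x (k : ℕ), (τ x) ^ k = τ (x ^ k) := by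
    intro x k
    refine LinearMap.ext fun v => Subtype.ext ?_
    have h1 : ((τ x ^ k) v : MonoidAlgebra L N) = (ρ x ^ k) v := by
      induction k with
      | zero => rfl
      | succ k ih =>
        rw [pow_succ', pow_succ', Module.End.mul_apply, Module.End.mul_apply, ← ih]
        rfl
    rw [h1, hρpow]
    rfl
  have hτone : τ 1 = 1 := by
    refine LinearMap.ext fun v => Subtype.ext ?_
    change ρ 1 (v : MonoidAlgebra L N) = v
    have : ρ 1 = 1 := by
      simp only [hρ]
      rw [← one_def, map_one]
    rw [this, Module.End.one_apply]
  have htr : ∀ x, σ (LinearMap.trace L E (τ x)) = LinearMap.trace L E (τ (x ^ j)) := by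
    intro x
    rw [galois_trace (τ x) hn (by rw [hτpow, pow_card_eq_one', hτone]) σ hjs, hτpow]
  have hsum : ∑ x : N, (w.coeff x : L) * LinearMap.trace L E (τ x) = l * (Module.finrank L E : L) := by
    have h1 : ∑ x : N, (w.coeff x : L) • τ x = l • (1 : Module.End L E) := by
      refine LinearMap.ext fun v => Subtype.ext ?_
      have hv' : (lrep L N w) v = l • (v : MonoidAlgebra L N) := Module.End.mem_eigenspace_iff.1 v.2
      have h2 : lrep L N w = ∑ x : N, (w.coeff x : L) • ρ x := by
        conv_lhs => rw [eq_sum_single w, map_sum]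
        refine Finset.sum_congr rfl fun x _ => ?_
        rw [map_zsmul]
        exact (Int.cast_smul_eq_zsmul L (w.coeff x) (ρ x)).symm
      rw [h2] at hv'
      simp only [LinearMap.sum_apply, LinearMap.smul_apply] at hv'
      have h3 : ((l • (1 : Module.End L E)) v : MonoidAlgebra L N) = l • (v : MonoidAlgebra L N) := rfl
      rw [h3, ← hv', LinearMap.sum_apply, Submodule.coe_sum]
      rfl
    have h2 := congrArg (LinearMap.trace L E) h1
    rw [map_sum, map_smul, LinearMap.trace_one, smul_eq_mul] at h2
    rw [← h2]
    refine Finset.sum_congr rfl fun x _ => ?_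
    rw [map_smul, smul_eq_mul]
  have hσ := congrArg σ hsum
  rw [map_sum, map_mul, map_natCast] at hσ
  have h3 : ∑ x : N, σ ((w.coeff x : L) * LinearMap.trace L E (τ x)) =
      ∑ x : N, (w.coeff x : L) * LinearMap.trace L E (τ x) := by
    rw [← Equiv.sum_comp (powCoprime (G := N) (n := j) hjc.symm)
      (fun x => (w.coeff x : L) * LinearMap.trace L E (τ x))]
    refine Finset.sum_congr rfl fun x _ => ?_
    rw [map_mul, map_intCast, htr, powCoprime_apply, hj x j hj0 hjc]
  rw [h3, hsum] at hσ
  have hne : (Module.finrank L E : L) ≠ 0 := by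
    have h4 : E ≠ ⊥ := hl
    have : Nontrivial E := Submodule.nontrivial_iff_ne_bot.2 h4
    exact_mod_cast (Module.finrank_pos (R := L) (M := E)).ne'
  exact (mul_right_cancel₀ hne hσ).symm

lemma eigenvalue_integral (w : MonoidAlgebra ℤ N)
    {l : L} (hl : (lrep L N w).HasEigenvalue l) : IsIntegral ℤ l := by
  have : Module.Finite ℤ (MonoidAlgebra ℤ N) := inferInstance
  obtain ⟨p, hp, h0⟩ := IsIntegral.of_finite ℤ w
  refine ⟨p, hp, ?_⟩
  obtain ⟨v, hv⟩ := hl.exists_hasEigenvector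
  have h1 : Polynomial.aeval (lrep L N w) (p.map (Int.castRingHom L)) = 0 := by
    have h2 := congrArg (lrep L N) h0
    rw [Polynomial.hom_eval₂, map_zero] at h2
    rw [← h2, Polynomial.aeval_def, Polynomial.eval₂_map]
    congr 1
    exact Subsingleton.elim _ _
  have h2 := Module.End.aeval_apply_of_hasEigenvector (p := p.map (Int.castRingHom L)) hv
  rw [h1, LinearMap.zero_apply, eq_comm, smul_eq_zero] at h2
  have h3 := h2.resolve_right hv.2
  rw [Polynomial.eval_map] at h3
  simpa using h3

end Fin

theorem nilpotent_aux (L : Type*) [Field L] [CharZero L] [Algebra ℚ L] [IsAlgClosure ℚ L]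
    [IsAlgClosed L] {N : Type*} [Group N] [Finite N] {w w' : MonoidAlgebra ℤ N}
    (hw : w ∈ Subring.center (MonoidAlgebra ℤ N)) (hww : w * w' = 1)
    (hj : ∀ (x : N) (j : ℕ), 0 < j → j.Coprime (Nat.card N) → w.coeff (x ^ j) = w.coeff x) :
    IsNilpotent (w * w - 1) := by
  have : Module.Finite L (MonoidAlgebra L N) := inferInstance
  have key : ∀ l : L, (lrep L N w).HasEigenvalue l → l ^ 2 = 1 := by
    intro l hl
    have hfix : ∀ σ : L ≃ₐ[ℚ] L, σ l = l := fun σ => eigenvalue_fixed hw hj hl (σ : L →+* L)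
    obtain ⟨r, hr⟩ := (InfiniteGalois.mem_range_algebraMap_iff_fixed (k := ℚ) l).2 hfix
    have hinteg := eigenvalue_integral w hl
    have hww' : w' * w = 1 := by rw [Subring.mem_center_iff.1 hw, hww]
    obtain ⟨v, hv⟩ := hl.exists_hasEigenvector
    have h1 : l • (lrep L N w') v = v := by
      rw [← map_smul, ← hv.apply_eq_smul, ← Module.End.mul_apply, ← map_mul, hww', map_one,
        Module.End.one_apply]
    have hl0 : l ≠ 0 := by
      rintro rfl
      rw [zero_smul] at h1
      exact hv.2 h1.symm
    have hinteg' : IsIntegral ℤ l⁻¹ := by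
      refine eigenvalue_integral w' (Module.End.hasEigenvalue_of_hasEigenvector (x := v) ⟨?_, hv.2⟩)
      rw [Module.End.mem_eigenspace_iff]
      rw [eq_inv_smul_iff₀ hl0, h1]
    rw [← hr] at hinteg hinteg'
    rw [← map_inv₀] at hinteg'
    have hi := (isIntegral_algebraMap_iff (algebraMap ℚ L).injective).1 hinteg
    have hi' := (isIntegral_algebraMap_iff (algebraMap ℚ L).injective).1 hinteg'
    obtain ⟨a, ha⟩ := IsIntegrallyClosed.isIntegral_iff.1 hi
    obtain ⟨b, hb⟩ := IsIntegrallyClosed.isIntegral_iff.1 hi'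
    have hr0 : r ≠ 0 := by
      rintro rfl
      rw [map_zero] at hr
      exact hl0 hr.symm
    have hab : a * b = 1 := by
      have : (algebraMap ℤ ℚ a) * (algebraMap ℤ ℚ b) = 1 := by rw [ha, hb, mul_inv_cancel₀ hr0]
      simp only [eq_intCast] at this
      exact_mod_cast this
    have ha2 : a ^ 2 = 1 := by
      rcases Int.eq_one_or_neg_one_of_mul_eq_one hab with h | h <;> simp [h]
    rw [← hr, ← ha]
    have : algebraMap ℚ L (algebraMap ℤ ℚ a) ^ 2 = algebraMap ℚ L (algebraMap ℤ ℚ (a ^ 2)) := by simp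
    rw [this, ha2]
    simp
  have hnil : IsNilpotent (lrep L N (w * w - 1)) := by
    set f := lrep L N (w * w - 1) with hf
    have hroots : ∀ z ∈ f.charpoly.roots, z = 0 := by
      intro z hz
      have h1 : f.HasEigenvalue z :=
        (Module.End.hasEigenvalue_iff_isRoot_charpoly f z).2 (Polynomial.isRoot_of_mem_roots hz)
      have h2 : z ∈ spectrum L f := h1.mem_spectrum
      have h3 : f = Polynomial.aeval (lrep L N w) (Polynomial.X ^ 2 - 1 : Polynomial L) := by
        simp [hf, sq]
      have hdeg : 0 < (Polynomial.X ^ 2 - 1 : Polynomial L).degree := by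
        rw [← Polynomial.C_1, Polynomial.degree_X_pow_sub_C (by norm_num)]
        norm_num
      rw [h3, spectrum.map_polynomial_aeval_of_degree_pos _ _ hdeg] at h2
      obtain ⟨l, hl, rfl⟩ := h2
      simp [key l (Module.End.hasEigenvalue_iff_mem_spectrum.2 hl)]
    have hspl := IsAlgClosed.splits f.charpoly
    have hch : f.charpoly = Polynomial.X ^ f.charpoly.roots.card := by
      conv_lhs => rw [hspl.eq_prod_roots_of_monic f.charpoly_monic]
      rw [Multiset.eq_replicate_card.2 hroots]
      simp
    have h0 := LinearMap.aeval_self_charpoly f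
    rw [hch] at h0
    exact ⟨_, by simpa using h0⟩
  obtain ⟨k, hk⟩ := hnil
  refine ⟨k, lrep_injective (L := L) ?_⟩
  rw [map_pow, hk, map_zero]

theorem nilpotent_of_finite {N : Type*} [Group N] [Finite N] {w w' : MonoidAlgebra ℤ N}
    (hw : w ∈ Subring.center (MonoidAlgebra ℤ N)) (hww : w * w' = 1)
    (hj : ∀ (x : N) (j : ℕ), 0 < j → j.Coprime (Nat.card N) → w.coeff (x ^ j) = w.coeff x) :
    IsNilpotent (w * w - 1) :=
  @nilpotent_aux (AlgebraicClosure ℚ) _ _ (AlgebraicClosure.instAlgebra ℚ)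
    (AlgebraicClosure.instIsAlgClosure ℚ) inferInstance N _ _ w w' hw hww hj

end CutHNN


namespace CutHNN

open MonoidAlgebra

section Assembly
variable {Γ : Type*} [Group Γ]

lemma exists_pull (H : Subgroup Γ) (x : MonoidAlgebra ℤ Γ) (hx : ∀ g, x.coeff g ≠ 0 → g ∈ H) :
    ∃ y : MonoidAlgebra ℤ H, mapDomainRingHom ℤ H.subtype y = x ∧
      ∀ h : H, y.coeff h = x.coeff (h : Γ) := by
  have hinj : Function.Injective H.subtype := Subtype.val_injective
  refine ⟨MonoidAlgebra.comapDomain H.subtype hinj x, ?_, ?_⟩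
  · have : (x.coeff.support : Set Γ) ⊆ Set.range H.subtype := by
      intro g hg
      exact ⟨⟨g, hx g (by simpa using hg)⟩, rfl⟩
    exact mapDomain_comapDomain this hinj
  · intro h
    simp

lemma pull_injective (H : Subgroup Γ) : Function.Injective (mapDomainRingHom ℤ H.subtype) :=
  mapDomain_injective (Subtype.val_injective : Function.Injective H.subtype)

lemma pull_center {H : Subgroup Γ} {x : MonoidAlgebra ℤ Γ} {y : MonoidAlgebra ℤ H}
    (hx : x ∈ Subring.center (MonoidAlgebra ℤ Γ)) (h : ∀ h : H, y.coeff h = x.coeff (h : Γ)) :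
    y ∈ Subring.center (MonoidAlgebra ℤ H) := by
  rw [mem_center_iff_coeff] at hx ⊢
  intro g k
  rw [h, h]
  exact hx g k

lemma fc_of_center {x : MonoidAlgebra ℤ Γ} (hx : x ∈ Subring.center (MonoidAlgebra ℤ Γ)) {g : Γ}
    (hg : x.coeff g ≠ 0) : g ∈ fcCenter Γ := by
  rw [mem_center_iff_coeff] at hx
  rw [mem_fcCenter_iff]
  refine (Finset.finite_toSet x.coeff.support).subset ?_
  rintro _ ⟨k, rfl⟩
  simpa [hx k g] using hg

lemma exists_of_mul_coeff {x y : MonoidAlgebra ℤ Γ} {g : Γ} (h : (x * y).coeff g ≠ 0) :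
    ∃ a b, x.coeff a ≠ 0 ∧ y.coeff b ≠ 0 ∧ a * b = g := by
  classical
  by_contra! hc
  apply h
  rw [coeff_mul, Finsupp.sum]
  refine Finset.sum_eq_zero fun a ha => ?_
  rw [Finsupp.sum]
  refine Finset.sum_eq_zero fun b hb => ?_
  rw [if_neg]
  exact hc a b (by simpa using ha) (by simpa using hb)

lemma torsion_of_homog {u : MonoidAlgebra ℤ Γ} (hu : u ∈ Subring.center (MonoidAlgebra ℤ Γ))
    {h : QT Γ} (hh : ∀ g : fcCenter Γ, u.coeff (g : Γ) ≠ 0 → qt Γ g = h) {g : Γ}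
    (hg : (u * st u).coeff g ≠ 0) : IsOfFinOrder g := by
  obtain ⟨a, b, ha, hb, rfl⟩ := exists_of_mul_coeff hg
  rw [st_coeff] at hb
  have h1 := hh ⟨a, fc_of_center hu ha⟩ ha
  have h2 := hh ⟨b⁻¹, fc_of_center hu hb⟩ hb
  have h3 := (qt_eq_one_iff (⟨a, fc_of_center hu ha⟩ * ⟨b⁻¹, fc_of_center hu hb⟩⁻¹ : fcCenter Γ)).1
    (by rw [map_mul, map_inv, h1, h2, mul_inv_cancel])
  simpa using h3

theorem cut_of_fc (hRS : ∀ x ∈ fcCenter Γ, IsOfFinOrder x → IsRSElement x) : IsCutGroup Γ := by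
  intro uu hu
  obtain ⟨u, v, huv, hvu⟩ := uu
  simp only at hu ⊢
  have hcu := Subring.mem_center_iff.1 hu
  have hv : v ∈ Subring.center (MonoidAlgebra ℤ Γ) := by
    rw [Subring.mem_center_iff]
    intro g
    calc g * v = v * u * g * v := by rw [hvu, one_mul]
      _ = v * (u * g) * v := by rw [mul_assoc v u g]
      _ = v * (g * u) * v := by rw [hcu g]
      _ = v * g * (u * v) := by simp only [mul_assoc]
      _ = v * g := by rw [huv, mul_one]
  have hcv := Subring.mem_center_iff.1 hv
  -- homogeneity
  obtain ⟨u0, hu0, hu0c⟩ := exists_pull (fcCenter Γ) u (fun g hg => fc_of_center hu hg)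
  obtain ⟨v0, hv0, hv0c⟩ := exists_pull (fcCenter Γ) v (fun g hg => fc_of_center hv hg)
  have huv0 : u0 * v0 = 1 := by
    apply pull_injective
    rw [map_mul, hu0, hv0, huv, map_one]
  have htw : TwoUniqueProds (QT Γ) := twoUnique _
  obtain ⟨h, hh1, hh2⟩ := unit_homogeneous (qt Γ) (pull_center hu hu0c) (pull_center hv hv0c) huv0
  have htu : ∀ g, (u * st u).coeff g ≠ 0 → IsOfFinOrder g := fun g hg =>
    torsion_of_homog hu (h := h) (fun g hg => hh1 g (by rwa [hu0c])) hg
  have htv : ∀ g, (v * st v).coeff g ≠ 0 → IsOfFinOrder g := fun g hg =>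
    torsion_of_homog hv (h := h⁻¹) (fun g hg => hh2 g (by rwa [hv0c])) hg
  set w := u * st u with hw
  set w' := v * st v with hw'
  have hwc : w ∈ Subring.center (MonoidAlgebra ℤ Γ) := mul_mem hu (st_mem_center hu)
  have hwc' : w' ∈ Subring.center (MonoidAlgebra ℤ Γ) := mul_mem hv (st_mem_center hv)
  have hww : w * w' = 1 := by
    rw [hw, hw', mul_assoc, ← mul_assoc (st u), hcv (st u), mul_assoc v, ← st_mul, hvu, st_one,
      mul_one, huv]
  have hstw : st w = w := by rw [hw, st_mul, st_st]
  -- the finite normal subgroup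
  let S : Set Γ := (w.coeff.support : Set Γ) ∪ (w'.coeff.support : Set Γ)
  have hSfin : S.Finite := (Finset.finite_toSet _).union (Finset.finite_toSet _)
  have hSfc : S ⊆ fcCenter Γ := by
    rintro g (hg | hg)
    · exact fc_of_center hwc (by simpa using hg)
    · exact fc_of_center hwc' (by simpa using hg)
  have hStor : ∀ x ∈ S, IsOfFinOrder x := by
    rintro g (hg | hg)
    · exact htu g (by simpa using hg)
    · exact htv g (by simpa using hg)
  have hNfin : Finite (Subgroup.closure S) := finite_closure hSfin hSfc hStor
  obtain ⟨w0, hw0, hw0c⟩ := exists_pull (Subgroup.closure S) w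
    (fun g hg => Subgroup.subset_closure (Or.inl (by simpa using hg)))
  obtain ⟨w0', hw0', hw0c'⟩ := exists_pull (Subgroup.closure S) w'
    (fun g hg => Subgroup.subset_closure (Or.inr (by simpa using hg)))
  have hww0 : w0 * w0' = 1 := by
    apply pull_injective
    rw [map_mul, hw0, hw0', hww, map_one]
  have hconj : ∀ a b : Γ, IsConj a b → w.coeff a = w.coeff b := by
    intro a b hab
    obtain ⟨c, rfl⟩ := isConj_iff.1 hab
    exact ((mem_center_iff_coeff w).1 hwc c a).symm
  have hpow : ∀ (x : Subgroup.closure S) (j : ℕ), 0 < j →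
      j.Coprime (Nat.card (Subgroup.closure S)) → w0.coeff (x ^ j) = w0.coeff x := by
    intro x j hj0 hj
    rw [hw0c, hw0c, Subgroup.coe_pow]
    have hxfc : (x : Γ) ∈ fcCenter Γ := (Subgroup.closure_le _).2 hSfc x.2
    have hxt : IsOfFinOrder (x : Γ) := Submonoid.isOfFinOrder_coe.2 (isOfFinOrder_of_finite x)
    have hjx : j.Coprime (orderOf (x : Γ)) := by
      rw [Subgroup.orderOf_coe]
      exact Nat.Coprime.coprime_dvd_right (orderOf_dvd_natCard x) hj
    rcases hRS x hxfc hxt j hj0 hjx with h | h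
    · exact hconj _ _ h
    · rw [hconj _ _ h, ← st_coeff, hstw]
  obtain ⟨k, hk⟩ := nilpotent_of_finite (pull_center hwc hw0c) hww0 hpow
  have hk2 : (w * w - 1) ^ k = 0 := by
    have := congrArg (mapDomainRingHom ℤ (Subgroup.closure S).subtype) hk
    rwa [map_pow, map_sub, map_mul, hw0, map_one, map_zero] at this
  have hw2 : w * w = 1 := by
    have hmem : w * w - 1 ∈ Subring.center (MonoidAlgebra ℤ Γ) :=
      sub_mem (mul_mem hwc hwc) (one_mem _)
    have hnil : IsNilpotent (⟨_, hmem⟩ : Subring.center (MonoidAlgebra ℤ Γ)) :=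
      ⟨k, Subtype.ext hk2⟩
    exact sub_eq_zero.1 (congrArg Subtype.val hnil.eq_zero)
  have h1 : w.coeff 1 ^ 2 ≤ 1 := by
    have := sq_le_coeff_mul_st w 1
    rwa [hstw, hw2, coeff_one_one] at this
  have h2 : 0 < w.coeff 1 := by
    by_contra hneg
    have h0 : u = 0 := eq_zero_of_mul_st (not_lt.1 hneg)
    rw [h0, zero_mul] at huv
    exact zero_ne_one huv
  have h3 : w.coeff 1 = 1 := by nlinarith
  exact trivial_of_mul_st h3

end Assembly

end CutHNN


namespace CutHNN

open HNNExtension HNNExtension.NormalWord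

section HNN
variable {G : Type*} [Group G] {A B : Subgroup G} (φ : A ≃* B)

lemma exists_reducedWord (x : HNNExtension G A B φ) : ∃ w : ReducedWord G A B, w.prod φ = x := by
  obtain ⟨d⟩ := TransversalPair.nonempty G A B
  refine ⟨(x • (empty : NormalWord d)).toReducedWord, ?_⟩
  rw [prod_smul, prod_empty, mul_one]

/-- the length of an element in the stable letter -/
noncomputable def tlen (x : HNNExtension G A B φ) : ℕ :=
  (Classical.choose (exists_reducedWord φ x)).toList.length

lemma tlen_prod (w : ReducedWord G A B) : tlen φ (w.prod φ) = w.toList.length := by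
  have h := Classical.choose_spec (exists_reducedWord φ (w.prod φ))
  have h2 := (ReducedWord.map_fst_eq_and_of_prod_eq φ h).1
  have := congrArg List.length h2
  simpa [tlen] using this

lemma exists_longer (N : Subgroup (HNNExtension G A B φ)) [hN : N.Normal]
    {x : HNNExtension G A B φ} (hx : x ∈ N) (h0 : 0 < tlen φ x) :
    ∃ y ∈ N, tlen φ x < tlen φ y := by
  obtain ⟨⟨h, l, hc⟩, rfl⟩ := exists_reducedWord φ x
  rw [tlen_prod] at h0 ⊢
  simp only at h0 ⊢
  rcases List.eq_nil_or_concat l with rfl | ⟨l', ⟨e, g⟩, hl⟩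
  · simp at h0
  obtain ⟨⟨e1, g1⟩, l1, hl1⟩ : ∃ a l1, l = a :: l1 := by
    cases l with
    | nil => simp at h0
    | cons a l1 => exact ⟨a, l1, rfl⟩
  have hhead : l.head? = some (e1, g1) := by rw [hl1]; rfl
  rw [List.concat_eq_append] at hl
  have hlast : l.getLast? = some (e, g) := by rw [hl]; simp
  by_cases he : e = e1
  · -- square
    have hc' : (l' ++ [(e, g * h)]).IsChain (fun a b : ℤˣ × G => a.2 ∈ toSubgroup A B a.1 → a.1 = b.1) := by
      rw [hl, List.isChain_append] at hc
      rw [List.isChain_append]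
      refine ⟨hc.1, by simp, ?_⟩
      intro a ha b hb
      have := hc.2.2 a ha (e, g) (by simp)
      simp only [List.head?_cons, Option.mem_def, Option.some.injEq] at hb
      rw [← hb]
      exact this
    have hc2 : ((l' ++ [(e, g * h)]) ++ l).IsChain
        (fun a b : ℤˣ × G => a.2 ∈ toSubgroup A B a.1 → a.1 = b.1) := by
      rw [List.isChain_append]
      refine ⟨hc', hc, ?_⟩
      intro a ha b hb _
      rw [hhead] at hb
      simp only [List.getLast?_append, List.getLast?_singleton, Option.some_or, Option.mem_def,
        Option.some.injEq] at ha hb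
      rw [← ha, ← hb]
      exact he
    refine ⟨_, N.mul_mem hx hx, ?_⟩
    have hp : (ReducedWord.mk h l hc).prod φ * (ReducedWord.mk h l hc).prod φ =
        (ReducedWord.mk h _ hc2).prod φ := by
      simp only [ReducedWord.prod]
      rw [List.map_append, List.prod_append, ← mul_assoc, ← mul_assoc]
      congr 1
      conv_lhs => rw [hl]
      simp [mul_assoc]
    rw [hp, tlen_prod]
    simp only [List.length_append]
    have : l.length = l'.length + 1 := by rw [hl]; simp
    simp
  · -- conjugate
    have he' : e = -e1 := by
      rcases Int.units_eq_one_or e with rfl | rfl <;> rcases Int.units_eq_one_or e1 with rfl | rfl <;>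
        simp_all
    have hc2 : ((e1, h) :: (l ++ [(-e1, (1 : G))])).IsChain
        (fun a b : ℤˣ × G => a.2 ∈ toSubgroup A B a.1 → a.1 = b.1) := by
      have h1 : (l ++ [(-e1, (1 : G))]).IsChain
        (fun a b : ℤˣ × G => a.2 ∈ toSubgroup A B a.1 → a.1 = b.1) := by
        rw [List.isChain_append]
        refine ⟨hc, by simp, ?_⟩
        intro a ha b hb _
        rw [hlast] at ha
        simp only [List.head?_cons, Option.mem_def, Option.some.injEq] at ha hb
        rw [← ha, ← hb]
        exact he'
      rw [hl1, List.cons_append] at h1 ⊢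
      rw [List.isChain_cons_cons]
      exact ⟨fun _ => rfl, h1⟩
    refine ⟨_, hN.conj_mem _ hx (t ^ (e1 : ℤ)), ?_⟩
    have hp : t ^ (e1 : ℤ) * (ReducedWord.mk h l hc).prod φ * (t ^ (e1 : ℤ))⁻¹ =
        (ReducedWord.mk 1 _ hc2).prod φ := by
      simp [ReducedWord.prod, mul_assoc]
    rw [hp, tlen_prod]
    simp

lemma finite_normal_le (N : Subgroup (HNNExtension G A B φ)) [hN : N.Normal] [Finite N]
    {x : HNNExtension G A B φ} (hx : x ∈ N) : ∃ g : G, of g = x := by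
  have hfin : (N : Set (HNNExtension G A B φ)).Finite := Set.toFinite _
  obtain ⟨m, hm, hmax⟩ := Set.exists_max_image (N : Set (HNNExtension G A B φ)) (tlen φ) hfin ⟨x, hx⟩
  have h0 : tlen φ m = 0 := by
    by_contra hne
    obtain ⟨y, hy, hlt⟩ := exists_longer φ N hm (Nat.pos_of_ne_zero hne)
    exact absurd (hmax y hy) (not_le.2 hlt)
  have hx0 : tlen φ x = 0 := Nat.le_zero.1 (h0 ▸ hmax x hx)
  obtain ⟨w, rfl⟩ := exists_reducedWord φ x
  rw [tlen_prod, List.length_eq_zero_iff] at hx0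
  exact ⟨w.head, by simp [ReducedWord.prod, hx0]⟩

lemma mem_toSubgroup_of_conj (u : ℤˣ) {g : G}
    (h : (t : HNNExtension G A B φ) ^ (u : ℤ) * of g * (t ^ (u : ℤ))⁻¹ ∈
      (of.range : Subgroup (HNNExtension G A B φ))) : g ∈ toSubgroup A B u := by
  by_contra hg
  let w : ReducedWord G A B := ⟨1, [(u, g), (-u, 1)], by simp [hg]⟩
  have hp : w.prod φ = t ^ (u : ℤ) * of g * (t ^ (u : ℤ))⁻¹ := by
    simp [ReducedWord.prod, w, mul_assoc]
  have := ReducedWord.toList_eq_nil_of_mem_of_range φ w (hp ▸ h)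
  simp [w] at this

theorem rs_of_fc (hRS : IsRSSubgroup A ∨ IsRSSubgroup B) (x : HNNExtension G A B φ)
    (hx : x ∈ fcCenter (HNNExtension G A B φ)) (ht : IsOfFinOrder x) : IsRSElement x := by
  let S : Set (HNNExtension G A B φ) := Set.range fun g => g * x * g⁻¹
  have hSfin : S.Finite := mem_fcCenter_iff.1 hx
  have hxS : x ∈ Subgroup.closure S := Subgroup.subset_closure ⟨1, by simp⟩
  have hN : (Subgroup.closure S).Normal := by
    apply normal_closure_of_conj
    rintro _ ⟨k, rfl⟩ g
    exact ⟨g * k, by simp [mul_assoc]⟩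
  have hfin : Finite (Subgroup.closure S) := by
    apply finite_closure hSfin
    · rintro _ ⟨k, rfl⟩
      exact conj_mem_fcCenter hx k
    · rintro _ ⟨k, rfl⟩
      have := MonoidHom.isOfFinOrder (MulAut.conj k).toMonoidHom ht
      simpa using this
  obtain ⟨g, rfl⟩ := finite_normal_le φ (Subgroup.closure S) hxS
  have hmem : ∀ u : ℤˣ, g ∈ toSubgroup A B u := by
    intro u
    apply mem_toSubgroup_of_conj φ u
    obtain ⟨k, hk⟩ := finite_normal_le φ (Subgroup.closure S) (hN.conj_mem _ hxS (t ^ (u : ℤ)))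
    exact ⟨k, hk⟩
  have hgt : IsOfFinOrder g := (of_injective φ).isOfFinOrder_iff.1 ht
  have hg : IsRSElement g := by
    rcases hRS with h | h
    · exact h g (by simpa using hmem 1) hgt
    · exact h g (by simpa using hmem (-1)) hgt
  intro j hj0 hj
  rw [orderOf_injective _ (of_injective φ)] at hj
  rcases hg j hj0 hj with h | h
  · left
    simpa using MonoidHom.map_isConj (of : G →* HNNExtension G A B φ) h
  · right
    simpa using MonoidHom.map_isConj (of : G →* HNNExtension G A B φ) h

end HNN

end CutHNN

/-- If `Π` is the HNN extension of a group `G` over isomorphic subgroups `A` and `B`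
(with isomorphism `φ : A ≃* B`) and one of `A` or `B` is an RS-subgroup of `G`,
then `Π` is a cut-group. -/
theorem isCutGroup_hnnExtension {G : Type*} [Group G] (A B : Subgroup G) (φ : A ≃* B)
    (hRS : IsRSSubgroup A ∨ IsRSSubgroup B) :
    IsCutGroup (HNNExtension G A B φ) := by
  exact CutHNN.cut_of_fc (CutHNN.rs_of_fc φ hRS)
end

section
/- Let n ≥ 2 be an even integer and let G = ℤ ⋊ C_n be the semidirect product of the infinite cyclic group ℤ by the cyclic group C_n of order n, where a fixed generator of C_n acts on ℤ by inversion (negation); equivalently, G = ⟨a, b | bⁿ = 1, bab⁻¹ = a⁻¹⟩. Then G is a cut-group if and only if n ∈ {2, 4, 6, 8, 12}. -/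
/-- The relations of the infinite metacyclic group
`G = ⟨a, b | bⁿ = 1, b a b⁻¹ = a⁻¹⟩ ≅ ℤ ⋊ Cₙ` (with a generator of `Cₙ` acting on `ℤ`
by inversion), where `a` and `b` are the generators indexed by `true` and `false`. -/
def metacyclicRelsZSemidirectCn (n : ℕ) : Set (FreeGroup Bool) :=
  {FreeGroup.of false ^ n,
   FreeGroup.of false * FreeGroup.of true * (FreeGroup.of false)⁻¹ * FreeGroup.of true}


section UnitConstruction

variable {R : Type*} [CommRing R]

/-- Geometric sum `1 + x + ⋯ + x^(k-1)`. -/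
def gsum (k : ℕ) (x : R) : R := ∑ i ∈ Finset.range k, x ^ i

lemma gsum_add (a b : ℕ) (x : R) : gsum (a + b) x = gsum a x + x ^ a * gsum b x := by
  simp [gsum, Finset.sum_range_add, pow_add, Finset.mul_sum]

lemma gsum_mul (a b : ℕ) (x : R) : gsum (a * b) x = gsum a x * gsum b (x ^ a) := by
  induction b with
  | zero => simp [gsum]
  | succ b ih =>
    rw [Nat.mul_succ, gsum_add, ih, gsum_add b 1 (x ^ a)]
    simp only [gsum, Finset.sum_range_one, ← pow_mul]
    ring

lemma mul_gsum {m : ℕ} {z : R} (hz : z ^ m = 1) : z * gsum m z = gsum m z := by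
  have h1 := gsum_add 1 m z
  have h2 := gsum_add m 1 z
  rw [add_comm 1 m, h2] at h1
  simp only [gsum, Finset.sum_range_one, pow_zero, pow_one, hz] at h1 ⊢
  linear_combination -h1

lemma pow_mul_gsum {m : ℕ} {z : R} (hz : z ^ m = 1) (i : ℕ) : z ^ i * gsum m z = gsum m z := by
  induction i with
  | zero => simp
  | succ i ih => rw [pow_succ, mul_assoc, mul_gsum hz, ih]

lemma gsum_pow_mul_gsum {m : ℕ} {z : R} (hz : z ^ m = 1) (k l : ℕ) :
    gsum k (z ^ l) * gsum m z = k * gsum m z := by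
  conv_lhs => rw [gsum, Finset.sum_mul]
  simp [← pow_mul, pow_mul_gsum hz]

lemma gsum_kl {m k l q : ℕ} {z : R} (hz : z ^ m = 1) (h : k * l = 1 + m * q) :
    gsum k z * gsum l (z ^ k) = 1 + q * gsum m z := by
  rw [← gsum_mul, h, gsum_add, gsum_mul, hz]
  have := mul_gsum hz
  simp only [gsum, Finset.sum_range_one, pow_zero, pow_one, one_pow, Finset.sum_const,
    Finset.card_range, nsmul_eq_mul, mul_one] at this ⊢
  linear_combination (q : R) * this

lemma unit_identity {m k l q : ℕ} {z : R} (hz : z ^ m = 1) (h : k * l = 1 + m * q) :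
    (gsum l z * gsum k z - q * gsum m z) *
      (gsum k (z ^ l) * gsum l (z ^ k) - q * gsum m z) = 1 := by
  have h1 := gsum_kl hz h
  have h2 := gsum_kl hz (by rw [mul_comm, h] : l * k = 1 + m * q)
  have e1 := gsum_pow_mul_gsum hz k l
  have e2 := gsum_pow_mul_gsum hz l k
  have e3 : gsum k z * gsum m z = k * gsum m z := by simpa using gsum_pow_mul_gsum hz k 1
  have e4 : gsum l z * gsum m z = l * gsum m z := by simpa using gsum_pow_mul_gsum hz l 1
  have e5 : gsum m z * gsum m z = m * gsum m z := by simpa using gsum_pow_mul_gsum hz m 1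
  have hc : (k : R) * l = 1 + m * q := by exact_mod_cast congrArg (Nat.cast : ℕ → R) h
  have A : gsum l z * gsum k z * gsum m z = (1 + m * q) * gsum m z := by
    rw [mul_assoc, e3, ← hc]; linear_combination (k : R) * e4
  have B : gsum k (z ^ l) * gsum l (z ^ k) * gsum m z = (1 + m * q) * gsum m z := by
    rw [mul_assoc, e2, ← hc]; linear_combination (l : R) * e1
  have C : gsum l z * gsum k z * (gsum k (z ^ l) * gsum l (z ^ k))
      = (1 + q * gsum m z) * (1 + q * gsum m z) := by
    rw [← h1]; nth_rewrite 1 [h1]; rw [← h2]; ring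
  linear_combination C - (q : R) * A - (q : R) * B + 2 * (q : R) ^ 2 * e5

end UnitConstruction

lemma exists_coprime_middle {m : ℕ} (hm : 5 ≤ m) (h6 : m ≠ 6) :
    ∃ k, Nat.Coprime k m ∧ 2 ≤ k ∧ k + 2 ≤ m := by
  rcases Nat.even_or_odd' m with ⟨t, rfl | rfl⟩
  · rcases Nat.even_or_odd' t with ⟨s, rfl | rfl⟩
    · refine ⟨2 * s - 1, ?_, by omega, by omega⟩
      obtain ⟨r, rfl⟩ : ∃ r, s = r + 1 := ⟨s - 1, by omega⟩
      have : 2 * (r + 1) - 1 = 2 * r + 1 := by omega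
      rw [this]
      have h2 : 2 * (2 * (r + 1)) = 2 + (2 * r + 1) * 2 := by ring
      rw [h2, Nat.coprime_add_mul_left_right]
      exact (Nat.coprime_two_right).2 ⟨r, rfl⟩
    · refine ⟨2 * s - 1, ?_, by omega, by omega⟩
      obtain ⟨r, rfl⟩ : ∃ r, s = r + 1 := ⟨s - 1, by omega⟩
      have : 2 * (r + 1) - 1 = 2 * r + 1 := by omega
      rw [this]
      have h2 : 2 * (2 * (r + 1) + 1) = 2 ^ 2 + (2 * r + 1) * 2 := by ring
      rw [h2, Nat.coprime_add_mul_left_right]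
      exact Nat.Coprime.pow_right 2 ((Nat.coprime_two_right).2 ⟨r, rfl⟩)
  · exact ⟨2, (Nat.coprime_two_left).2 ⟨t, rfl⟩, le_refl _, by omega⟩

lemma norm_exp_pow_sub_one (m : ℕ) (k : ℕ) (hm : 0 < m) (hk : k ≤ m) :
    ‖Complex.exp (2 * Real.pi * Complex.I / m) ^ k - 1‖ = 2 * Real.sin (Real.pi * k / m) := by
  have hm' : (0 : ℝ) < m := by exact_mod_cast hm
  have : Complex.exp (2 * Real.pi * Complex.I / m) ^ k
      = Complex.exp (Complex.I * ((2 * (Real.pi * k / m) : ℝ) : ℂ)) := by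
    rw [← Complex.exp_nat_mul]
    congr 1
    push_cast
    ring
  rw [this, Complex.norm_exp_I_mul_ofReal_sub_one]
  rw [mul_div_cancel_left₀ _ (two_ne_zero)]
  rw [Real.norm_of_nonneg]
  apply mul_nonneg (by norm_num)
  apply Real.sin_nonneg_of_nonneg_of_le_pi
  · positivity
  · rw [div_le_iff₀ hm']
    have : (k : ℝ) ≤ m := by exact_mod_cast hk
    nlinarith [Real.pi_pos]

lemma sin_le_sin_mid {m k : ℕ} (hk : 1 ≤ k) (hkm : k + 1 ≤ m) :
    Real.sin (Real.pi * (1 : ℕ) / m) ≤ Real.sin (Real.pi * k / m) := by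
  have hm' : (0 : ℝ) < m := by exact_mod_cast (by omega : 0 < m)
  have hk1 : (1 : ℝ) ≤ k := by exact_mod_cast hk
  have hk2 : (k : ℝ) + 1 ≤ m := by exact_mod_cast hkm
  have hp := Real.pi_pos
  rcases le_total (2 * k) m with h | h
  · have h' : 2 * (k : ℝ) ≤ m := by exact_mod_cast h
    apply Real.sin_le_sin_of_le_of_le_pi_div_two
    · have : 0 ≤ Real.pi * (1 : ℕ) / m := by positivity
      linarith
    · rw [div_le_iff₀ hm']; nlinarith
    · gcongr
  · have h' : (m : ℝ) ≤ 2 * k := by exact_mod_cast h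
    rw [← Real.sin_pi_sub (Real.pi * k / m)]
    apply Real.sin_le_sin_of_le_of_le_pi_div_two
    · have : 0 ≤ Real.pi * (1 : ℕ) / m := by positivity
      linarith
    · have : Real.pi / 2 ≤ Real.pi * k / m := by rw [le_div_iff₀ hm']; nlinarith
      linarith
    · have : Real.pi - Real.pi * k / m = Real.pi * (m - k) / m := by field_simp
      rw [this]
      gcongr
      push_cast
      linarith

lemma sin_lt_sin_mid {m k : ℕ} (hk : 2 ≤ k) (hkm : k + 2 ≤ m) :
    Real.sin (Real.pi * (1 : ℕ) / m) < Real.sin (Real.pi * k / m) := by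
  have hm' : (0 : ℝ) < m := by exact_mod_cast (by omega : 0 < m)
  have hk1 : (2 : ℝ) ≤ k := by exact_mod_cast hk
  have hk2 : (k : ℝ) + 2 ≤ m := by exact_mod_cast hkm
  have hp := Real.pi_pos
  rcases le_total (2 * k) m with h | h
  · have h' : 2 * (k : ℝ) ≤ m := by exact_mod_cast h
    apply Real.sin_lt_sin_of_lt_of_le_pi_div_two
    · have : 0 ≤ Real.pi * (1 : ℕ) / m := by positivity
      linarith
    · rw [div_le_iff₀ hm']; nlinarith
    · gcongr; omega
  · have h' : (m : ℝ) ≤ 2 * k := by exact_mod_cast h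
    rw [← Real.sin_pi_sub (Real.pi * k / m)]
    apply Real.sin_lt_sin_of_lt_of_le_pi_div_two
    · have : 0 ≤ Real.pi * (1 : ℕ) / m := by positivity
      linarith
    · have : Real.pi / 2 ≤ Real.pi * k / m := by rw [le_div_iff₀ hm']; nlinarith
      linarith
    · have : Real.pi - Real.pi * k / m = Real.pi * (m - k) / m := by field_simp
      rw [this]
      gcongr
      push_cast
      linarith

lemma norm_gsum_mul (m k : ℕ) (hm : 0 < m) (hk : k ≤ m) :
    ‖gsum k (Complex.exp (2 * Real.pi * Complex.I / m))‖ * Real.sin (Real.pi * (1 : ℕ) / m)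
      = Real.sin (Real.pi * k / m) := by
  have h := congrArg norm (geom_sum_mul (Complex.exp (2 * Real.pi * Complex.I / m)) k)
  rw [norm_mul, norm_exp_pow_sub_one m k hm hk] at h
  have h1 := norm_exp_pow_sub_one m 1 hm hm
  rw [pow_one] at h1
  rw [h1] at h
  unfold gsum
  linarith

lemma sin_one_pos {m : ℕ} (hm : 2 ≤ m) : 0 < Real.sin (Real.pi * (1 : ℕ) / m) := by
  have hm' : (2 : ℝ) ≤ m := by exact_mod_cast hm
  apply Real.sin_pos_of_pos_of_lt_pi
  · have := Real.pi_pos; positivity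
  · rw [div_lt_iff₀ (by linarith)]; have := Real.pi_pos; push_cast; nlinarith

lemma one_le_norm_gsum {m l : ℕ} (hl : 1 ≤ l) (hlm : l + 1 ≤ m) :
    1 ≤ ‖gsum l (Complex.exp (2 * Real.pi * Complex.I / m))‖ := by
  have h := norm_gsum_mul m l (by omega) (by omega)
  have h2 := sin_le_sin_mid hl hlm
  have h3 := sin_one_pos (m := m) (by omega)
  rw [← h] at h2
  by_contra hc
  push Not at hc
  nlinarith

lemma one_lt_norm_gsum {m l : ℕ} (hl : 2 ≤ l) (hlm : l + 2 ≤ m) :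
    1 < ‖gsum l (Complex.exp (2 * Real.pi * Complex.I / m))‖ := by
  have h := norm_gsum_mul m l (by omega) (by omega)
  have h2 := sin_lt_sin_mid hl hlm
  have h3 := sin_one_pos (m := m) (by omega)
  rw [← h] at h2
  by_contra hc
  push Not at hc
  nlinarith

lemma exists_klq {m : ℕ} (hm : 5 ≤ m) (h6 : m ≠ 6) :
    ∃ k l q, k * l = 1 + m * q ∧ 2 ≤ k ∧ k + 2 ≤ m ∧ 1 ≤ l ∧ l + 1 ≤ m := by
  obtain ⟨k, hc, h2, hk⟩ := exists_coprime_middle hm h6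
  obtain ⟨l, hlm, hl⟩ := Nat.exists_mul_mod_eq_one_of_coprime hc (by omega)
  refine ⟨k, l, k * l / m, ?_, h2, hk, ?_, hlm⟩
  · have := Nat.mod_add_div (k * l) m
    omega
  · rcases Nat.eq_zero_or_pos l with rfl | h
    · simp at hl
    · exact h

section PGroup

/-- Abbreviation for the presented group. -/
abbrev PG (n : ℕ) := PresentedGroup (metacyclicRelsZSemidirectCn n)

/-- The generator `a`. -/
def ga (n : ℕ) : PG n := PresentedGroup.of true
/-- The generator `b`. -/
def gb (n : ℕ) : PG n := PresentedGroup.of false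

lemma gb_pow (n : ℕ) : gb n ^ n = 1 := by
  have : PresentedGroup.mk (metacyclicRelsZSemidirectCn n) (FreeGroup.of false ^ n) = 1 :=
    PresentedGroup.one_of_mem (by simp [metacyclicRelsZSemidirectCn])
  rw [map_pow] at this
  exact this

lemma gb_ga (n : ℕ) : gb n * ga n * (gb n)⁻¹ = (ga n)⁻¹ := by
  have : PresentedGroup.mk (metacyclicRelsZSemidirectCn n)
      (FreeGroup.of false * FreeGroup.of true * (FreeGroup.of false)⁻¹ * FreeGroup.of true) = 1 :=
    PresentedGroup.one_of_mem (by simp [metacyclicRelsZSemidirectCn])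
  rw [map_mul] at this
  exact eq_inv_of_mul_eq_one_left this

lemma gb_ga_zpow (n : ℕ) (i : ℤ) : gb n * ga n ^ i = ga n ^ (-i) * gb n := by
  have h : gb n * ga n ^ i * (gb n)⁻¹ = (ga n) ^ (-i) := by
    rw [← conj_zpow, gb_ga, inv_zpow, zpow_neg]
  rw [← h]; group

lemma gbinv_ga_zpow (n : ℕ) (i : ℤ) : (gb n)⁻¹ * ga n ^ i = ga n ^ (-i) * (gb n)⁻¹ := by
  have h := gb_ga_zpow n (-i)
  rw [neg_neg] at h
  rw [inv_mul_eq_iff_eq_mul, ← mul_assoc, h]; group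

lemma gb_sq_commute_ga (n : ℕ) : Commute (gb n ^ 2) (ga n) := by
  have h := gb_ga_zpow n 1
  have h' := gb_ga_zpow n (-1)
  simp only [zpow_one, neg_neg] at h h'
  rw [Commute, SemiconjBy, pow_two, mul_assoc, h, ← mul_assoc, h', mul_assoc]

/-- Homs out of the presented group. -/
def pgLift {n : ℕ} {H : Type*} [Group H] (x y : H) (hy : y ^ n = 1) (hxy : y * x * y⁻¹ * x = 1) :
    PG n →* H :=
  PresentedGroup.toGroup (f := fun t => if t then x else y) (by
    intro r hr
    simp only [metacyclicRelsZSemidirectCn, Set.mem_insert_iff, Set.mem_singleton_iff] at hr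
    rcases hr with rfl | rfl
    · simpa using hy
    · simpa using hxy)

@[simp] lemma pgLift_ga {n : ℕ} {H : Type*} [Group H] (x y : H) (hy : y ^ n = 1)
    (hxy : y * x * y⁻¹ * x = 1) : pgLift x y hy hxy (ga n) = x := by
  simp [pgLift, ga, PresentedGroup.toGroup.of]

@[simp] lemma pgLift_gb {n : ℕ} {H : Type*} [Group H] (x y : H) (hy : y ^ n = 1)
    (hxy : y * x * y⁻¹ * x = 1) : pgLift x y hy hxy (gb n) = y := by
  simp [pgLift, gb, PresentedGroup.toGroup.of]

lemma normal_form {n : ℕ} (g : PG n) : ∃ i j : ℤ, g = ga n ^ i * gb n ^ j := by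
  have hg : g ∈ Subgroup.closure (Set.range (PresentedGroup.of :
      Bool → PG n)) := by
    rw [PresentedGroup.closure_range_of]; trivial
  induction hg using Subgroup.closure_induction_left with
  | one => exact ⟨0, 0, by simp⟩
  | mul_left x hx y hy ih =>
    obtain ⟨i, j, rfl⟩ := ih
    obtain ⟨t, rfl⟩ := hx
    cases t
    · change ∃ i' j' : ℤ, gb n * _ = _
      refine ⟨-i, 1 + j, ?_⟩
      rw [← mul_assoc, gb_ga_zpow, zpow_add, zpow_one, mul_assoc]
    · change ∃ i' j' : ℤ, ga n * _ = _
      refine ⟨1 + i, j, ?_⟩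
      rw [zpow_add, zpow_one, mul_assoc]
  | inv_mul_cancel x hx y hy ih =>
    obtain ⟨i, j, rfl⟩ := ih
    obtain ⟨t, rfl⟩ := hx
    cases t
    · change ∃ i' j' : ℤ, (gb n)⁻¹ * _ = _
      refine ⟨-i, -1 + j, ?_⟩
      rw [← mul_assoc, gbinv_ga_zpow, zpow_add, zpow_neg_one, mul_assoc]
    · change ∃ i' j' : ℤ, (ga n)⁻¹ * _ = _
      refine ⟨-1 + i, j, ?_⟩
      rw [zpow_add, zpow_neg_one, mul_assoc]

lemma gb_sq_central (n : ℕ) (g : PG n) : Commute (gb n ^ 2) g := by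
  obtain ⟨i, j, rfl⟩ := normal_form g
  exact ((gb_sq_commute_ga n).zpow_right i).mul_right
    ((Commute.refl (gb n)).pow_left 2 |>.zpow_right j)

lemma not_cut {n m : ℕ} (hnm : n = 2 * m) (hm : 5 ≤ m) (h6 : m ≠ 6) : ¬ IsCutGroup (PG n) := by
  intro hcut
  obtain ⟨k, l, q, h, hk2, hkm, hl, hlm⟩ := exists_klq hm h6
  let z : Subring.center (MonoidAlgebra ℤ (PG n)) :=
    ⟨MonoidAlgebra.of ℤ (PG n) (gb n ^ 2), by
      rw [Subring.mem_center_iff]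
      intro x
      exact ((MonoidAlgebra.of_commute (gb_sq_central n) x).eq).symm⟩
  have hz : z ^ m = 1 := by
    apply Subtype.ext
    change (MonoidAlgebra.of ℤ (PG n) (gb n ^ 2)) ^ m = 1
    rw [← map_pow, ← pow_mul, ← hnm, gb_pow, map_one]
  have hid := unit_identity hz h
  have hid' : (_ : MonoidAlgebra ℤ (PG n)) * _ = 1 := congrArg Subtype.val hid
  have hid2 := hid
  rw [mul_comm] at hid2
  have hid2' : (_ : MonoidAlgebra ℤ (PG n)) * _ = 1 := congrArg Subtype.val hid2
  obtain ⟨g, hg⟩ := hcut ⟨_, _, hid', hid2'⟩ (SetLike.coe_mem (gsum l z * gsum k z - (q : Subring.center (MonoidAlgebra ℤ (PG n))) * gsum m z))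
  have hn0 : (n : ℂ) ≠ 0 := by
    have : n ≠ 0 := by omega
    exact_mod_cast this
  let w : ℂ := Complex.exp (2 * Real.pi * Complex.I / n)
  have hw : w ^ n = 1 := by
    change Complex.exp _ ^ n = 1
    rw [← Complex.exp_nat_mul, mul_div_cancel₀ _ hn0, Complex.exp_two_pi_mul_I]
  have hw2 : w ^ 2 = Complex.exp (2 * Real.pi * Complex.I / m) := by
    change Complex.exp _ ^ 2 = _
    rw [← Complex.exp_nat_mul, hnm]
    congr 1
    push_cast
    have : (m : ℂ) ≠ 0 := by
      have : m ≠ 0 := by omega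
      exact_mod_cast this
    field_simp
  let wu : ℂˣ := Units.mk0 w (Complex.exp_ne_zero _)
  let χ : PG n →* ℂˣ := pgLift 1 wu (by ext; simpa [wu] using hw) (by simp)
  let F : MonoidAlgebra ℤ (PG n) →+* ℂ :=
    (MonoidAlgebra.lift ℤ ℂ (PG n) ((Units.coeHom ℂ).comp χ)).toRingHom
  have hF : ∀ g, F (MonoidAlgebra.of ℤ (PG n) g) = (χ g : ℂ) := by
    intro g; simp [F]
  have hnorm : ∀ g, ‖(χ g : ℂ)‖ = 1 := by
    intro g
    obtain ⟨i, j, rfl⟩ := normal_form g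
    have : ‖w‖ = 1 := Complex.norm_eq_one_of_pow_eq_one hw (by omega)
    simp [χ, wu, this]
  let F' : Subring.center (MonoidAlgebra ℤ (PG n)) →+* ℂ := F.comp (Subring.subtype _)
  have hF'z : F' z = w ^ 2 := by
    change F (MonoidAlgebra.of ℤ (PG n) (gb n ^ 2)) = _
    rw [hF]; simp [χ, wu]
  have hgs : ∀ t, F' (gsum t z) = gsum t (w ^ 2) := by
    intro t; simp [gsum, hF'z]
  have hm0 : gsum m (w ^ 2) = 0 := by
    have h1 : gsum m (w ^ 2) * (w ^ 2 - 1) = 0 := by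
      rw [gsum, geom_sum_mul, ← pow_mul, ← hnm, hw, sub_self]
    have h2 : w ^ 2 - 1 ≠ 0 := by
      rw [← norm_ne_zero_iff, hw2]
      have := norm_exp_pow_sub_one m 1 (by omega) (by omega)
      rw [pow_one] at this
      rw [this]
      have := sin_one_pos (m := m) (by omega)
      positivity
    exact (mul_eq_zero.1 h1).resolve_right h2
  have hval : ‖F' (gsum l z * gsum k z - q * gsum m z)‖ = 1 := by
    rcases hg with hg | hg
    · rw [← hnorm g, ← hF, ← hg]; rfl
    · rw [← hnorm g, ← norm_neg (χ g : ℂ), ← hF, ← map_neg, ← hg]; rfl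
  rw [map_sub, map_mul, map_mul, hgs, hgs, hgs, hm0, mul_zero, sub_zero, norm_mul, hw2] at hval
  have h1 := one_lt_norm_gsum hk2 hkm
  have h2 := one_le_norm_gsum hl hlm
  nlinarith

end PGroup

section AbelianUnits

open LaurentPolynomial in
lemma laurent_unit {f g : LaurentPolynomial ℂ} (h : f * g = 1) :
    ∃ (c : ℂ) (k : ℤ), f = C c * T k := by
  obtain ⟨n, p, hp⟩ := LaurentPolynomial.exists_T_pow f
  obtain ⟨n', q, hq⟩ := LaurentPolynomial.exists_T_pow g
  have hpq : p * q = Polynomial.X ^ (n + n') := by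
    apply Polynomial.toLaurent_injective
    rw [map_mul, hp, hq, Polynomial.toLaurent_X_pow]
    push_cast
    rw [T_add]
    linear_combination (T (n : ℤ) * T (n' : ℤ)) * h
  obtain ⟨i, hi, hassoc⟩ := (dvd_prime_pow Polynomial.prime_X (n + n')).1 ⟨q, hpq.symm⟩
  obtain ⟨v, hv⟩ := hassoc.symm
  obtain ⟨c, hc, hcv⟩ := Polynomial.isUnit_iff.1 v.isUnit
  refine ⟨c, i - n, ?_⟩
  have : f = (f * T (n : ℤ)) * T (-(n : ℤ)) := by
    rw [mul_assoc, ← T_add]; simp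
  rw [this, ← hp, ← hv, ← hcv, map_mul, Polynomial.toLaurent_X_pow, Polynomial.toLaurent_C,
    sub_eq_add_neg, T_add]
  ring

variable {m : ℕ} [NeZero m]

/-- The abelian group `ℤ × C_m`. -/
abbrev AG (m : ℕ) := Multiplicative (ℤ × ZMod m)

open LaurentPolynomial in
/-- The monoid hom to Laurent polynomials given by the `k`-th character. -/
noncomputable def phiHom (k : ZMod m) : AG m →* LaurentPolynomial ℂ where
  toFun x := C (ZMod.stdAddChar (k * x.toAdd.2)) * T x.toAdd.1
  map_one' := by simp
  map_mul' x y := by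
    simp only [toAdd_mul, Prod.snd_add, Prod.fst_add, mul_add, AddChar.map_add_eq_mul, map_mul,
      T_add]
    ring

/-- Induced ring hom. -/
noncomputable def phi (k : ZMod m) : MonoidAlgebra ℤ (AG m) →+* LaurentPolynomial ℂ :=
  (MonoidAlgebra.lift ℤ (LaurentPolynomial ℂ) (AG m) (phiHom k)).toRingHom

lemma phi_coeff (k : ZMod m) (u : MonoidAlgebra ℤ (AG m)) (i : ℤ) :
    (phi k u).coeff i = ∑ j : ZMod m,
      (u.coeff (Multiplicative.ofAdd (i, j)) : ℂ) * ZMod.stdAddChar (k * j) := by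
  induction u using MonoidAlgebra.induction_linear with
  | zero => simp
  | add f g hf hg => simp [hf, hg, add_mul, Finset.sum_add_distrib]
  | single x r =>
    obtain ⟨i', j'⟩ := x
    classical
    have : phi k (MonoidAlgebra.single (Multiplicative.ofAdd (i', j')) r)
        = AddMonoidAlgebra.single i' ((r : ℂ) * ZMod.stdAddChar (k * j')) := by
      simp [phi, phiHom, ← LaurentPolynomial.single_eq_C_mul_T]
    change (phi k (MonoidAlgebra.single (Multiplicative.ofAdd (i', j')) r)).coeff i = ∑ j : ZMod m,
      ((MonoidAlgebra.single (Multiplicative.ofAdd (i', j')) r).coeff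
        (Multiplicative.ofAdd (i, j)) : ℂ) * _
    rw [this]
    simp only [AddMonoidAlgebra.coeff_single, MonoidAlgebra.coeff_single, Finsupp.single_apply,
      Multiplicative.ofAdd.injective.eq_iff, Prod.mk.injEq]
    by_cases hi : i' = i
    · subst hi
      simp
    · simp [hi]

lemma parseval (c : ZMod m → ℤ) :
    ∑ k : ZMod m, ‖∑ j : ZMod m, (c j : ℂ) * ZMod.stdAddChar (k * j)‖ ^ 2
      = m * ∑ j, ((c j : ℝ)) ^ 2 := by
  classical
  have key : ∀ k : ZMod m, ((‖∑ j : ZMod m, (c j : ℂ) * ZMod.stdAddChar (k * j)‖ ^ 2 : ℝ) : ℂ)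
      = ∑ j, ∑ j', (c j : ℂ) * c j' * ZMod.stdAddChar (k * (j - j')) := by
    intro k
    push_cast
    rw [← Complex.mul_conj', map_sum, Finset.sum_mul_sum]
    refine Finset.sum_congr rfl fun j _ => Finset.sum_congr rfl fun j' _ => ?_
    rw [map_mul (starRingEnd ℂ), mul_sub, sub_eq_add_neg, AddChar.map_add_eq_mul, AddChar.map_neg_eq_conj]
    simp
    ring
  have : ((∑ k : ZMod m, ‖∑ j : ZMod m, (c j : ℂ) * ZMod.stdAddChar (k * j)‖ ^ 2 : ℝ) : ℂ)
      = ((m * ∑ j, ((c j : ℝ)) ^ 2 : ℝ) : ℂ) := by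
    rw [Complex.ofReal_sum]
    simp_rw [key]
    rw [Finset.sum_comm]
    push_cast
    rw [Finset.mul_sum]
    refine Finset.sum_congr rfl fun j _ => ?_
    rw [Finset.sum_comm]
    simp_rw [← Finset.mul_sum, AddChar.sum_mulShift _ (ZMod.isPrimitive_stdAddChar m), sub_eq_zero]
    simp [ZMod.card]
    ring
  exact_mod_cast this

/-- Roots of unity of order dividing 4 or 6 are imaginary quadratic. -/
lemma exists_quad {w : ℂ} (h : w ^ 4 = 1 ∨ w ^ 6 = 1) : ∃ p : ℤ, w ^ 2 = p * w - 1 := by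
  rcases h with h | h
  · have : (w - 1) * ((w + 1) * (w ^ 2 + 1)) = 0 := by linear_combination h
    rcases mul_eq_zero.1 this with h | h
    · exact ⟨2, by push_cast; linear_combination (w - 1) * h⟩
    rcases mul_eq_zero.1 h with h | h
    · exact ⟨-2, by push_cast; linear_combination (w + 1) * h⟩
    · exact ⟨0, by push_cast; linear_combination h⟩
  · have : (w - 1) * ((w + 1) * ((w ^ 2 + w + 1) * (w ^ 2 - w + 1))) = 0 := by
      linear_combination h
    rcases mul_eq_zero.1 this with h | h
    · exact ⟨2, by push_cast; linear_combination (w - 1) * h⟩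
    rcases mul_eq_zero.1 h with h | h
    · exact ⟨-2, by push_cast; linear_combination (w + 1) * h⟩
    rcases mul_eq_zero.1 h with h | h
    · exact ⟨-1, by push_cast; linear_combination h⟩
    · exact ⟨1, by push_cast; linear_combination h⟩

lemma quad_pow {w : ℂ} {p : ℤ} (h : w ^ 2 = p * w - 1) (t : ℕ) :
    ∃ x y : ℤ, w ^ t = x + y * w := by
  induction t with
  | zero => exact ⟨1, 0, by simp⟩
  | succ t ih =>
    obtain ⟨x, y, hxy⟩ := ih
    refine ⟨-y, x + y * p, ?_⟩
    rw [pow_succ, hxy]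
    push_cast
    linear_combination (y : ℂ) * h

lemma quad_normSq {w : ℂ} {p : ℤ} (hw : ‖w‖ = 1) (h : w ^ 2 = p * w - 1) (x y : ℤ) :
    ∃ N : ℤ, ‖(x + y * w : ℂ)‖ ^ 2 = N := by
  refine ⟨x ^ 2 + p * x * y + y ^ 2, ?_⟩
  have h1 : w * (starRingEnd ℂ) w = 1 := by rw [Complex.mul_conj', hw]; simp
  have hw0 : w ≠ 0 := by rintro rfl; simp at hw
  have h2 : (starRingEnd ℂ) w = p - w := by
    apply mul_left_cancel₀ hw0
    rw [h1]; linear_combination h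
  have : ((‖(x + y * w : ℂ)‖ ^ 2 : ℝ) : ℂ) = ((x ^ 2 + p * x * y + y ^ 2 : ℤ) : ℂ) := by
    push_cast
    rw [← Complex.mul_conj']
    simp only [map_add, map_mul, map_intCast, h2]
    linear_combination (-(y : ℂ) ^ 2) * h
  exact_mod_cast this

lemma stdAddChar_pow (k j : ZMod m) :
    (ZMod.stdAddChar (k * j) : ℂ) = (ZMod.stdAddChar k : ℂ) ^ j.val := by
  rw [← AddChar.map_nsmul_eq_pow]
  congr 1
  rw [nsmul_eq_mul, ZMod.natCast_zmod_val, mul_comm]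

/-- Sum of the coefficients: Laurent evaluation at 1. -/
noncomputable def evalOne : LaurentPolynomial ℂ →+* ℂ :=
  (LaurentPolynomial.eval₂ (RingHom.id ℂ) (1 : ℂˣ))

lemma normSq_int (hm : m ∣ 4 ∨ m ∣ 6) (k : ZMod m) (u : MonoidAlgebra ℤ (AG m)) :
    ∃ N : ℤ, ‖evalOne (phi k u)‖ ^ 2 = N := by
  set w : ℂ := ZMod.stdAddChar k with hwdef
  have hwm : w ^ m = 1 := by
    rw [hwdef, ← AddChar.map_nsmul_eq_pow]; simp
  have hw46 : w ^ 4 = 1 ∨ w ^ 6 = 1 := by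
    rcases hm with ⟨d, hd⟩ | ⟨d, hd⟩
    · left; rw [hd, pow_mul, hwm, one_pow]
    · right; rw [hd, pow_mul, hwm, one_pow]
  have hw1 : ‖w‖ = 1 := Complex.norm_eq_one_of_pow_eq_one hwm (NeZero.ne m)
  obtain ⟨p, hp⟩ := exists_quad hw46
  have : ∃ x y : ℤ, evalOne (phi k u) = x + y * w := by
    induction u using MonoidAlgebra.induction_linear with
    | zero => exact ⟨0, 0, by simp⟩
    | add f g hf hg =>
      obtain ⟨x, y, h⟩ := hf
      obtain ⟨x', y', h'⟩ := hg
      exact ⟨x + x', y + y', by rw [map_add, map_add, h, h']; push_cast; ring⟩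
    | single a r =>
      obtain ⟨x, y, h⟩ := quad_pow hp (a.toAdd.2).val
      refine ⟨r * x, r * y, ?_⟩
      have : evalOne (phi k (MonoidAlgebra.single a r)) = r * w ^ (a.toAdd.2).val := by
        simp [phi, phiHom, evalOne, stdAddChar_pow, hwdef]
      rw [this, h]; push_cast; ring
  obtain ⟨x, y, hxy⟩ := this
  rw [hxy]
  exact quad_normSq hw1 hp x y

lemma norm_evalOne_sq (hm : m ∣ 4 ∨ m ∣ 6) (k : ZMod m) {u v : MonoidAlgebra ℤ (AG m)}
    (huv : u * v = 1) : ‖evalOne (phi k u)‖ ^ 2 = 1 := by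
  obtain ⟨N, hN⟩ := normSq_int hm k u
  obtain ⟨M, hM⟩ := normSq_int hm k v
  have h : evalOne (phi k u) * evalOne (phi k v) = 1 := by
    have h0 := (evalOne.comp (phi k)).map_mul u v
    rw [huv, RingHom.map_one] at h0
    exact h0.symm
  have h1 : (N : ℝ) * M = 1 := by
    rw [← hN, ← hM, ← mul_pow, ← norm_mul, h]; simp
  have h2 : N * M = 1 := by exact_mod_cast h1
  have h3 : (0 : ℝ) ≤ N := by rw [← hN]; exact sq_nonneg _
  have h4 : 0 ≤ N := by exact_mod_cast h3
  rw [hN, Int.eq_one_of_mul_eq_one_right h4 h2]; simp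

lemma ag_units_trivial (hm : m ∣ 4 ∨ m ∣ 6) {u v : MonoidAlgebra ℤ (AG m)} (huv : u * v = 1) :
    ∃ x, u = MonoidAlgebra.of ℤ (AG m) x ∨ u = -MonoidAlgebra.of ℤ (AG m) x := by
  classical
  let I : Finset ℤ := u.coeff.support.image fun x => x.toAdd.1
  have hI : ∀ i j, u.coeff (Multiplicative.ofAdd (i, j)) ≠ 0 → i ∈ I := by
    intro i j h
    exact Finset.mem_image.2 ⟨_, Finsupp.mem_support_iff.2 h, rfl⟩
  have hk : ∀ k : ZMod m, ∑ i ∈ I, ‖(phi k u).coeff i‖ ^ 2 = 1 := by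
    intro k
    have h1 : phi k u * phi k v = 1 := by rw [← map_mul, huv, map_one]
    obtain ⟨c, d, hcd⟩ := laurent_unit h1
    have hc : ‖c‖ ^ 2 = 1 := by
      rw [← norm_evalOne_sq hm k huv, hcd]; simp [evalOne]
    have hco : ∀ i, (phi k u).coeff i = if d = i then c else 0 := by
      intro i
      rw [hcd, ← LaurentPolynomial.single_eq_C_mul_T, AddMonoidAlgebra.coeff_single,
        Finsupp.single_apply]
    have hd : d ∈ I := by
      by_contra hd
      have h0 : (phi k u).coeff d = 0 := by
        rw [phi_coeff]
        refine Finset.sum_eq_zero fun j _ => ?_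
        have : u.coeff (Multiplicative.ofAdd (d, j)) = 0 := by
          by_contra h; exact hd (hI d j h)
        rw [this]; simp
      rw [hco, if_pos rfl] at h0
      rw [h0] at hc; simp at hc
    rw [Finset.sum_eq_single d]
    · rw [hco, if_pos rfl, hc]
    · intro b _ hb
      rw [hco, if_neg hb.symm]; simp
    · exact fun h => absurd hd h
  have hm0 : (m : ℝ) ≠ 0 := by exact_mod_cast NeZero.ne m
  have hsum : (m : ℝ) * ∑ i ∈ I, ∑ j : ZMod m,
      ((u.coeff (Multiplicative.ofAdd (i, j)) : ℤ) : ℝ) ^ 2 = m * 1 := by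
    rw [Finset.mul_sum]
    simp_rw [← parseval fun j => u.coeff (Multiplicative.ofAdd (_, j)), ← phi_coeff]
    rw [Finset.sum_comm]
    simp [hk, ZMod.card]
  have hsum2 : ∑ i ∈ I, ∑ j : ZMod m, (u.coeff (Multiplicative.ofAdd (i, j))) ^ 2 = 1 := by
    exact_mod_cast mul_left_cancel₀ hm0 hsum
  rw [← Finset.sum_product'] at hsum2
  obtain ⟨x, hx, hx0⟩ : ∃ x ∈ I ×ˢ (Finset.univ : Finset (ZMod m)),
      (u.coeff (Multiplicative.ofAdd (x.1, x.2))) ^ 2 ≠ 0 := by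
    apply Finset.exists_ne_zero_of_sum_ne_zero
    rw [hsum2]; exact one_ne_zero
  have hnn : ∀ y ∈ (I ×ˢ (Finset.univ : Finset (ZMod m))).erase x,
      0 ≤ (u.coeff (Multiplicative.ofAdd (y.1, y.2))) ^ 2 := fun y _ => sq_nonneg _
  rw [← Finset.add_sum_erase _ _ hx] at hsum2
  have h1 : 0 < (u.coeff (Multiplicative.ofAdd (x.1, x.2))) ^ 2 :=
    lt_of_le_of_ne (sq_nonneg _) (Ne.symm hx0)
  have h2 := Finset.sum_nonneg hnn
  have hx1 : (u.coeff (Multiplicative.ofAdd (x.1, x.2))) ^ 2 = 1 := by linarith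
  have hrest : ∀ y : ℤ × ZMod m, y ≠ x → u.coeff (Multiplicative.ofAdd y) = 0 := by
    intro y hy
    by_contra hne
    have hyI : y ∈ (I ×ˢ (Finset.univ : Finset (ZMod m))).erase x := by
      refine Finset.mem_erase.2 ⟨hy, Finset.mem_product.2 ⟨hI y.1 y.2 hne, Finset.mem_univ _⟩⟩
    have h0 := (Finset.sum_eq_zero_iff_of_nonneg hnn).1 (by linarith) y hyI
    exact hne (pow_eq_zero_iff (two_ne_zero) |>.1 h0)
  have hu : u = MonoidAlgebra.single (Multiplicative.ofAdd x)
      (u.coeff (Multiplicative.ofAdd x)) := by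
    ext y
    rw [MonoidAlgebra.coeff_single, Finsupp.single_apply]
    split_ifs with h
    · rw [h]
    · exact hrest y.toAdd (fun h' => h (by rw [← h']; rfl))
  refine ⟨Multiplicative.ofAdd x, ?_⟩
  have hx1' : (u.coeff (Multiplicative.ofAdd x)) ^ 2 = 1 := hx1
  rcases mul_self_eq_one_iff.1 ((sq _).symm.trans hx1') with h | h
  · left; rw [hu, h]; rfl
  · right; rw [hu, h]; ext y; simp
end AbelianUnits

section Final

variable {m : ℕ} [NeZero m]

lemma gb_sq_pow (m : ℕ) : (gb (2 * m) ^ 2) ^ m = 1 := by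
  rw [← pow_mul, gb_pow]

/-- The embedding of `ℤ × C_m` as the subgroup generated by `a` and `b^2`. -/
noncomputable def iota (m : ℕ) [NeZero m] : AG m →* PG (2 * m) where
  toFun x := ga (2 * m) ^ x.toAdd.1 * (gb (2 * m) ^ 2) ^ x.toAdd.2.val
  map_one' := by simp
  map_mul' x y := by
    simp only [toAdd_mul, Prod.snd_add, Prod.fst_add, ZMod.val_add]
    rw [← pow_eq_pow_mod _ (gb_sq_pow m), zpow_add, pow_add]
    have h := ((gb_sq_central (2 * m) (ga (2 * m) ^ y.toAdd.1)).pow_left x.toAdd.2.val).eq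
    simp only [mul_assoc]
    congr 1
    rw [← mul_assoc, ← mul_assoc, h]

/-- Projection to the infinite dihedral group. -/
def toDih (m : ℕ) : PG (2 * m) →* DihedralGroup 0 :=
  pgLift (DihedralGroup.r 1) (DihedralGroup.sr 0) (by
    rw [pow_mul, pow_two]; simp) (by simp)

lemma toDih_ga (m : ℕ) (i : ℤ) : toDih m (ga (2 * m) ^ i) = DihedralGroup.r (Int.cast i : ZMod 0) := by
  simp [toDih]

lemma dih_inj {i j : ℤ}
    (h : (DihedralGroup.r (Int.cast i : ZMod 0) : DihedralGroup 0)
      = DihedralGroup.r (Int.cast j : ZMod 0)) : i = j := by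
  have h' : (Int.cast i : ZMod 0) = Int.cast j := DihedralGroup.r.inj h
  have h2 : (Int.cast i : ℤ) = Int.cast j := h'
  simpa using h2

lemma toDih_gb_sq (m : ℕ) : toDih m (gb (2 * m) ^ 2) = 1 := by
  simp [toDih, pow_two]

/-- Projection to the cyclic group. -/
def toCyc (m : ℕ) : PG (2 * m) →* Multiplicative (ZMod (2 * m)) :=
  pgLift 1 (Multiplicative.ofAdd 1) (by
    rw [← ofAdd_nsmul, nsmul_eq_mul, ZMod.natCast_self]; simp) (by simp)

lemma iota_injective : Function.Injective (iota m) := by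
  rw [injective_iff_map_eq_one]
  intro x hx
  have hx' : ga (2 * m) ^ x.toAdd.1 * (gb (2 * m) ^ 2) ^ x.toAdd.2.val = 1 := hx
  have h1 : x.toAdd.1 = 0 := by
    have := congrArg (toDih m) hx'
    rw [map_mul, toDih_ga, map_pow, toDih_gb_sq, one_pow, mul_one, map_one] at this
    apply dih_inj
    rw [this, Int.cast_zero, DihedralGroup.one_def]
  have h2 : x.toAdd.2 = 0 := by
    have := congrArg (toCyc m) hx'
    rw [h1, zpow_zero, one_mul, map_pow, map_pow, ← pow_mul] at this
    simp only [toCyc, pgLift_gb, map_one] at this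
    rw [← ofAdd_nsmul, nsmul_eq_mul, mul_one, ofAdd_eq_one, ZMod.natCast_eq_zero_iff] at this
    have hlt := ZMod.val_lt x.toAdd.2
    have : m ∣ x.toAdd.2.val := Nat.dvd_of_mul_dvd_mul_left two_pos this
    rw [← ZMod.val_eq_zero]
    exact Nat.eq_zero_of_dvd_of_lt this hlt
  exact Multiplicative.toAdd.injective (Prod.ext h1 h2)

lemma mem_range_or (g : PG (2 * m)) :
    (∃ x, g = iota m x) ∨ ∃ i t : ℤ, g = ga (2 * m) ^ i * (gb (2 * m) ^ (2 * t) * gb (2 * m)) := by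
  obtain ⟨i, j, rfl⟩ := normal_form g
  rcases Int.even_or_odd' j with ⟨t, rfl | rfl⟩
  · left
    refine ⟨Multiplicative.ofAdd (i, (t : ZMod m)), ?_⟩
    change _ = ga (2 * m) ^ i * (gb (2 * m) ^ 2) ^ (t : ZMod m).val
    congr 1
    have h : ((t : ZMod m).val : ℤ) = t % m := ZMod.val_intCast t
    rw [← zpow_natCast (gb (2 * m) ^ 2), h, zpow_mul]
    have hb : (gb (2 * m) ^ (2 : ℤ)) = gb (2 * m) ^ 2 := by norm_cast
    rw [hb]
    conv_lhs => rw [← Int.emod_add_mul_ediv t m]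
    rw [zpow_add, zpow_mul, zpow_natCast, gb_sq_pow, one_zpow, mul_one]
  · right
    exact ⟨i, t, by rw [zpow_add, zpow_one]⟩

lemma central_support {u : MonoidAlgebra ℤ (PG (2 * m))}
    (hu : ∀ g, Commute (MonoidAlgebra.of ℤ (PG (2 * m)) g) u) (i t : ℤ) :
    u.coeff (ga (2 * m) ^ i * (gb (2 * m) ^ (2 * t) * gb (2 * m))) = 0 := by
  by_contra hne
  set a := ga (2 * m) with ha
  set b := gb (2 * m) with hb
  have hconj : ∀ s : ℤ, u.coeff (a ^ (i + 2 * s) * (b ^ (2 * t) * b)) ≠ 0 := by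
    intro s
    have h := (hu (a ^ s)).eq
    rw [MonoidAlgebra.of_apply] at h
    have h' := congrArg (fun f => f.coeff (a ^ (i + s) * (b ^ (2 * t) * b))) h
    simp only [MonoidAlgebra.coeff_single_mul_apply, MonoidAlgebra.coeff_mul_single_apply,
      one_mul, mul_one] at h'
    have e1 : (a ^ s)⁻¹ * (a ^ (i + s) * (b ^ (2 * t) * b)) = a ^ i * (b ^ (2 * t) * b) := by
      rw [← mul_assoc, ← zpow_neg, ← zpow_add]; congr 2; ring
    have e2 : a ^ (i + s) * (b ^ (2 * t) * b) * (a ^ s)⁻¹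
        = a ^ (i + 2 * s) * (b ^ (2 * t) * b) := by
      have hc : Commute (b ^ (2 * t)) (a ^ s) := by
        have := (gb_sq_central (2 * m) (a ^ s)).zpow_left t
        rw [zpow_mul]
        exact_mod_cast this
      rw [← zpow_neg, mul_assoc, mul_assoc, gb_ga_zpow, neg_neg, ← mul_assoc (b ^ (2 * t)), hc.eq,
        mul_assoc, ← mul_assoc, ← zpow_add]
      congr 2; ring
    rw [e1, e2] at h'
    rw [← h']; exact hne
  have hinj : Function.Injective fun s : ℤ => a ^ (i + 2 * s) * (b ^ (2 * t) * b) := by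
    intro s s' h
    have h1 : a ^ (i + 2 * s) = a ^ (i + 2 * s') := mul_right_cancel h
    have h2 := congrArg (toDih m) h1
    rw [toDih_ga, toDih_ga] at h2
    have h3 : i + 2 * s = i + 2 * s' := dih_inj h2
    omega
  exact Set.infinite_of_injective_forall_mem hinj
    (fun s => Finset.mem_coe.2 (Finsupp.mem_support_iff.2 (hconj s)))
    u.coeff.support.finite_toSet

lemma central_lift {u : MonoidAlgebra ℤ (PG (2 * m))}
    (hu : ∀ g, Commute (MonoidAlgebra.of ℤ (PG (2 * m)) g) u) :
    ∃ u' : MonoidAlgebra ℤ (AG m), MonoidAlgebra.mapDomain (iota m) u' = u := by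
  refine ⟨MonoidAlgebra.comapDomain (iota m) iota_injective u, ?_⟩
  ext g
  rw [MonoidAlgebra.coeff_mapDomain, MonoidAlgebra.coeff_comapDomain]
  rcases mem_range_or g with ⟨x, rfl⟩ | ⟨i, t, rfl⟩
  · rw [Finsupp.mapDomain_apply iota_injective, Finsupp.comapDomain_apply]
  · rw [central_support hu]
    by_cases h : ga (2 * m) ^ i * (gb (2 * m) ^ (2 * t) * gb (2 * m)) ∈ Set.range (iota m)
    · obtain ⟨x, hx⟩ := h
      rw [← hx, Finsupp.mapDomain_apply iota_injective, Finsupp.comapDomain_apply, hx,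
        central_support hu]
    · exact Finsupp.mapDomain_of_notMem_range _ _ h

lemma is_cut (hm : m ∣ 4 ∨ m ∣ 6) : IsCutGroup (PG (2 * m)) := by
  intro u hu
  have hu1 : ∀ g, Commute (MonoidAlgebra.of ℤ (PG (2 * m)) g) (u : MonoidAlgebra ℤ (PG (2 * m))) :=
    fun g => (Subring.mem_center_iff.1 hu) _
  have hv1 : ∀ g, Commute (MonoidAlgebra.of ℤ (PG (2 * m)) g)
      ((u⁻¹ : (MonoidAlgebra ℤ (PG (2 * m)))ˣ) : MonoidAlgebra ℤ (PG (2 * m))) :=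
    fun g => (hu1 g).units_inv_right
  obtain ⟨u', hu'⟩ := central_lift hu1
  obtain ⟨v', hv'⟩ := central_lift hv1
  have huv : u' * v' = 1 := by
    apply MonoidAlgebra.mapDomain_injective (iota_injective (m := m))
    rw [MonoidAlgebra.mapDomain_mul, hu', hv', MonoidAlgebra.mapDomain_one, Units.mul_inv]
  obtain ⟨x, hx | hx⟩ := ag_units_trivial hm huv
  · refine ⟨iota m x, Or.inl ?_⟩
    rw [← hu', hx]; simp
  · refine ⟨iota m x, Or.inr ?_⟩
    rw [← hu', hx]
    change MonoidAlgebra.mapDomainRingHom ℤ (iota m) _ = _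
    rw [map_neg]
    simp

end Final

/-- For an even integer `n ≥ 2`, the group
`G = ℤ ⋊ Cₙ = ⟨a, b | bⁿ = 1, b a b⁻¹ = a⁻¹⟩` is a cut-group if and only if
`n ∈ {2, 4, 6, 8, 12}`. -/
theorem isCutGroup_z_semidirect_cn_iff (n : ℕ) (hn : 2 ≤ n) (heven : Even n) :
    IsCutGroup (PresentedGroup (metacyclicRelsZSemidirectCn n)) ↔
      n ∈ ({2, 4, 6, 8, 12} : Set ℕ) := by

  obtain ⟨m, hm⟩ := heven
  obtain rfl : n = 2 * m := by omega
  have : NeZero m := ⟨by omega⟩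
  constructor
  · intro hcut
    by_contra hnot
    simp only [Set.mem_insert_iff, Set.mem_singleton_iff] at hnot
    exact not_cut rfl (by omega) (by omega) hcut
  · intro hmem
    simp only [Set.mem_insert_iff, Set.mem_singleton_iff] at hmem
    apply is_cut
    have : m = 1 ∨ m = 2 ∨ m = 3 ∨ m = 4 ∨ m = 6 := by omega
    rcases this with rfl | rfl | rfl | rfl | rfl <;> decide
end

section
/- Let m ≥ 3 be an integer, let r be a unit of ℤ/mℤ with r ≠ 1, and let G = (ℤ/mℤ) ⋊ ℤ be the semidirect product where the generator 1 ∈ ℤ acts on the additive group ℤ/mℤ by multiplication by r; equivalently, G = ⟨a, b | aᵐ = 1, bab⁻¹ = aʳ⟩. Then G is a cut-group if and only if the unit group (ℤ/mℤ)ˣ is generated by {−1, r}. -/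
/-- The relations of the infinite metacyclic group
`G = ⟨a, b | aᵐ = 1, b a b⁻¹ = aʳ⟩ ≅ (ℤ/mℤ) ⋊ ℤ` (with the generator `1 ∈ ℤ` acting on
`ℤ/mℤ` by multiplication by the unit `r`), where `a` and `b` are the generators indexed
by `true` and `false`. -/
def metacyclicRelsCmSemidirectZ (m : ℕ) (r : (ZMod m)ˣ) : Set (FreeGroup Bool) :=
  {FreeGroup.of true ^ m,
   FreeGroup.of false * FreeGroup.of true * (FreeGroup.of false)⁻¹ *
     (FreeGroup.of true ^ ((r : ZMod m).val))⁻¹}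

set_option linter.unusedSectionVars false
set_option linter.style.haveILetI false

namespace CutAux

/-- Concrete model of `(ℤ/m) ⋊ ℤ`. -/
@[ext] structure MG (m : ℕ) (r : (ZMod m)ˣ) where
  i : ZMod m
  k : ℤ

variable {m : ℕ} {r : (ZMod m)ˣ}

instance : Mul (MG m r) := ⟨fun x y => ⟨x.i + (r ^ x.k : (ZMod m)ˣ) * y.i, x.k + y.k⟩⟩
instance : One (MG m r) := ⟨⟨0, 0⟩⟩
instance : Inv (MG m r) := ⟨fun x => ⟨-((r ^ (-x.k) : (ZMod m)ˣ) * x.i), -x.k⟩⟩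

@[simp] lemma mul_i (x y : MG m r) : (x * y).i = x.i + (r ^ x.k : (ZMod m)ˣ) * y.i := rfl
@[simp] lemma mul_k (x y : MG m r) : (x * y).k = x.k + y.k := rfl
@[simp] lemma one_i : (1 : MG m r).i = 0 := rfl
@[simp] lemma one_k : (1 : MG m r).k = 0 := rfl
@[simp] lemma inv_i (x : MG m r) : (x⁻¹).i = -((r ^ (-x.k) : (ZMod m)ˣ) * x.i) := rfl
@[simp] lemma inv_k (x : MG m r) : (x⁻¹).k = -x.k := rfl

instance : Group (MG m r) := Group.ofLeftAxioms
  (by intro x y z; ext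
      · simp only [mul_i, mul_k, zpow_add, Units.val_mul]; ring
      · simp only [mul_k]; ring)
  (by intro x; ext <;> simp)
  (by intro x; ext <;> simp)

/-- `a^i` -/
def ga (r : (ZMod m)ˣ) (i : ZMod m) : MG m r := ⟨i, 0⟩
/-- `b^k` -/
def gb (r : (ZMod m)ˣ) (k : ℤ) : MG m r := ⟨0, k⟩

lemma eq_ab (x : MG m r) : x = ga r x.i * gb r x.k := by ext <;> simp [ga, gb]

lemma ga_pow (n : ℕ) : (ga r 1) ^ n = ga r n := by
  induction n with
  | zero => ext <;> simp [ga]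
  | succ n ih => rw [pow_succ, ih]; ext <;> simp [ga]

lemma gb_pow (n : ℕ) : (gb r 1) ^ n = gb r n := by
  induction n with
  | zero => ext <;> simp [gb]
  | succ n ih => rw [pow_succ, ih]; ext <;> simp [gb]

lemma gb_zpow (n : ℤ) : (gb r 1) ^ n = gb r n := by
  induction n using Int.negInduction with
  | nat n => rw [zpow_natCast, gb_pow]
  | neg _ n => rw [zpow_neg, zpow_natCast, gb_pow]; ext <;> simp [gb]

section pres
variable [NeZero m]

/-- the presented group -/
abbrev PG (m : ℕ) (r : (ZMod m)ˣ) := PresentedGroup (metacyclicRelsCmSemidirectZ m r)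

/-- image of `a` -/
def pA (m : ℕ) (r : (ZMod m)ˣ) : PG m r := PresentedGroup.of true
/-- image of `b` -/
def pB (m : ℕ) (r : (ZMod m)ˣ) : PG m r := PresentedGroup.of false

lemma pA_pow : pA m r ^ m = 1 := by
  have := PresentedGroup.one_of_mem (rels := metacyclicRelsCmSemidirectZ m r)
    (x := FreeGroup.of true ^ m) (by simp [metacyclicRelsCmSemidirectZ])
  simp only [map_pow] at this
  exact this

lemma pB_conj : pB m r * pA m r * (pB m r)⁻¹ = pA m r ^ ((r : ZMod m).val) := by
  have := PresentedGroup.one_of_mem (rels := metacyclicRelsCmSemidirectZ m r)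
    (x := FreeGroup.of false * FreeGroup.of true * (FreeGroup.of false)⁻¹ *
     (FreeGroup.of true ^ ((r : ZMod m).val))⁻¹) (by simp [metacyclicRelsCmSemidirectZ])
  rw [← mul_inv_eq_one]
  simp only [map_pow, map_mul, map_inv] at this
  exact this

lemma pA_nat (n : ℕ) : pA m r ^ ((n : ZMod m).val) = pA m r ^ n := by
  rw [ZMod.val_natCast, ← pow_eq_pow_mod n pA_pow]

lemma pA_add (i j : ZMod m) : pA m r ^ (i + j).val = pA m r ^ i.val * pA m r ^ j.val := by
  rw [← pow_add, ← pA_nat (i.val + j.val)]; simp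

lemma pB_comm (i : ZMod m) : pB m r * pA m r ^ i.val = pA m r ^ (r * i : ZMod m).val * pB m r := by
  have h : pB m r * pA m r ^ i.val * (pB m r)⁻¹ = pA m r ^ (r * i : ZMod m).val := by
    rw [← conj_pow, pB_conj, ← pow_mul, ← pA_nat]; simp
  rw [← h]; group

lemma pB_pow_comm (n : ℕ) (i : ZMod m) :
    pB m r ^ n * pA m r ^ i.val = pA m r ^ (((r ^ n : (ZMod m)ˣ) : ZMod m) * i).val * pB m r ^ n := by
  induction n generalizing i with
  | zero => simp
  | succ n ih =>
    rw [pow_succ, mul_assoc, pB_comm, ← mul_assoc, ih, mul_assoc, pow_succ]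
    simp [mul_assoc]

lemma pB_zpow_comm (n : ℤ) (i : ZMod m) :
    pB m r ^ n * pA m r ^ i.val = pA m r ^ (((r ^ n : (ZMod m)ˣ) : ZMod m) * i).val * pB m r ^ n := by
  induction n using Int.negInduction with
  | nat n => simpa using pB_pow_comm n i
  | neg _ n =>
    have := pB_pow_comm (r := r) n (((r ^ (-(n : ℤ)) : (ZMod m)ˣ) : ZMod m) * i)
    rw [← mul_assoc, ← Units.val_mul, ← zpow_natCast r n, ← zpow_add, add_neg_cancel, zpow_zero,
      Units.val_one, one_mul] at this
    rw [zpow_neg (pB m r), zpow_natCast (pB m r), inv_mul_eq_iff_eq_mul, ← mul_assoc, this, mul_assoc, mul_inv_cancel,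
      mul_one]

/-- model to presented group -/
def bwd : MG m r →* PG m r where
  toFun x := pA m r ^ x.i.val * pB m r ^ x.k
  map_one' := by simp
  map_mul' x y := by
    simp only [mul_i, mul_k, pA_add, zpow_add]
    rw [mul_assoc, mul_assoc, ← mul_assoc (pB m r ^ x.k), pB_zpow_comm]
    simp only [mul_assoc]

/-- presented group to model -/
def fwd : PG m r →* MG m r :=
  PresentedGroup.toGroup (f := fun t => if t then ga r 1 else gb r 1) (by
    intro x hx
    simp only [metacyclicRelsCmSemidirectZ, Set.mem_insert_iff, Set.mem_singleton_iff] at hx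
    rcases hx with rfl | rfl
    · simp [ga_pow]; ext <;> simp [ga]
    · simp [ga_pow]; ext <;> simp [ga, gb])

lemma fwd_A : fwd (pA m r) = ga r 1 := by simp [fwd, pA]
lemma fwd_B : fwd (pB m r) = gb r 1 := by simp [fwd, pB]

/-- the isomorphism -/
def isoMG : PG m r ≃* MG m r :=
  MonoidHom.toMulEquiv fwd bwd
    (by
      apply PresentedGroup.ext
      intro t
      cases t
      · change bwd (fwd (pB m r)) = pB m r
        rw [fwd_B]; simp [bwd, gb]
      · change bwd (fwd (pA m r)) = pA m r
        rw [fwd_A]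
        have := pA_nat (m := m) (r := r) 1
        simpa [bwd, ga] using this)
    (by
      ext1 x
      simp only [MonoidHom.comp_apply, MonoidHom.id_apply]
      conv_rhs => rw [eq_ab x]
      simp [bwd, fwd_A, fwd_B, ga_pow, gb_zpow])

end pres

lemma isCut_of_equiv {G H : Type*} [Group G] [Group H] (e : G ≃* H) (h : IsCutGroup G) :
    IsCutGroup H := by
  intro u hu
  let E : MonoidAlgebra ℤ G ≃+* MonoidAlgebra ℤ H := (MonoidAlgebra.domCongr ℤ ℤ e).toRingEquiv
  have hE : ∀ g, E (MonoidAlgebra.of ℤ G g) = MonoidAlgebra.of ℤ H (e g) := by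
    intro g; simp [E]
  obtain ⟨g, hg⟩ := h (Units.map E.symm.toRingHom.toMonoidHom u) (by
    rw [Subring.mem_center_iff] at hu ⊢
    intro g
    apply E.injective
    have := hu (E g)
    simpa using this)
  refine ⟨e g, ?_⟩
  have h1 : E (E.symm (u : MonoidAlgebra ℤ H)) = u := by simp
  rcases hg with hg | hg
  · left; rw [← hE, ← hg]; exact h1.symm
  · right; rw [← hE, ← map_neg, ← hg]; exact h1.symm

end CutAux
namespace CutAux
open NumberField

section fourier
variable (m : ℕ) [NeZero m]

/-- the cyclotomic field -/
abbrev LL := CyclotomicField m ℚ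

instance instCycLL : IsCyclotomicExtension {m} ℚ (LL m) := by
  have : NeZero ((m : ℕ) : ℚ) := ⟨by exact_mod_cast NeZero.ne m⟩
  exact CyclotomicField.isCyclotomicExtension m ℚ

/-- the standard additive character with values in the cyclotomic field -/
noncomputable def psi : AddChar (ZMod m) (LL m) :=
  AddChar.zmodChar m (IsCyclotomicExtension.zeta_pow m ℚ (LL m))

lemma psi_primitive : (psi m).IsPrimitive :=
  AddChar.zmodChar_primitive_of_primitive_root m (IsCyclotomicExtension.zeta_spec m ℚ (LL m))

/-- the isomorphism from the Galois group -/
noncomputable def gal : Gal(LL m/ℚ) ≃* (ZMod m)ˣ :=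
  IsCyclotomicExtension.Rat.galEquivZMod m (LL m)

lemma psi_pow (i : ZMod m) : psi m i ^ m = 1 := by
  rw [← AddChar.map_nsmul_eq_pow]; simp

lemma gal_psi (τ : Gal(LL m/ℚ)) (i : ZMod m) :
    τ (psi m i) = psi m ((gal m τ : ZMod m) * i) := by
  rw [IsCyclotomicExtension.Rat.galEquivZMod_apply_of_pow_eq m (LL m) τ (psi_pow m i),
    ← AddChar.map_nsmul_eq_pow]
  simp [gal]

lemma psi_integral (i : ZMod m) : IsIntegral ℤ (psi m i) :=
  IsIntegral.of_pow (NeZero.pos m) (by rw [psi_pow]; exact isIntegral_one)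

/-- Fourier transform -/
noncomputable def chi (x : ZMod m → ℤ) (j : ZMod m) : LL m := ∑ i, (x i : LL m) * psi m (j * i)

lemma chi_integral (x : ZMod m → ℤ) (j : ZMod m) : IsIntegral ℤ (chi m x j) :=
  IsIntegral.sum _ fun i _ => (isIntegral_algebraMap (R := ℤ) (x := x i)).mul (psi_integral m _)

lemma gal_chi (τ : Gal(LL m/ℚ)) (x : ZMod m → ℤ) (j : ZMod m) :
    τ (chi m x j) = chi m x ((gal m τ : ZMod m) * j) := by
  simp [chi, map_sum, gal_psi, mul_assoc]

lemma chi_inv (x : ZMod m → ℤ) (r : (ZMod m)ˣ) (hx : ∀ i, x (r * i) = x i) (j : ZMod m) :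
    chi m x (r * j) = chi m x j := by
  unfold chi
  symm
  rw [← Equiv.sum_comp (Units.mulLeft r)]
  refine Finset.sum_congr rfl fun i _ => ?_
  simp only [Units.mulLeft_apply, hx]
  congr 2; ring

lemma sum_chi (x : ZMod m → ℤ) :
    ∑ j, chi m x j * chi m x (-j) = ((m * ∑ i, x i ^ 2 : ℤ) : LL m) := by
  have h1 : ∀ j, chi m x j * chi m x (-j) =
      ∑ i, ∑ i', (x i : LL m) * x i' * psi m (j * (i - i')) := by
    intro j
    rw [chi, chi, Finset.sum_mul_sum]
    refine Finset.sum_congr rfl fun i _ => Finset.sum_congr rfl fun i' _ => ?_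
    rw [mul_mul_mul_comm, ← AddChar.map_add_eq_mul]
    congr 2; ring
  simp only [h1]
  rw [Finset.sum_comm]
  push_cast
  rw [Finset.mul_sum]
  refine Finset.sum_congr rfl fun i _ => ?_
  rw [Finset.sum_comm]
  simp only [← Finset.mul_sum]
  simp only [AddChar.sum_mulShift _ (psi_primitive m)]
  rw [Finset.sum_eq_single i]
  · simp [ZMod.card]; ring
  · intro b _ hb
    simp [sub_eq_zero, hb.symm]
  · simp

lemma chi_int (x : ZMod m → ℤ) (r : (ZMod m)ˣ) (hx : ∀ i, x (r * i) = x i)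
    (hr : Subgroup.closure ({-1, r} : Set (ZMod m)ˣ) = ⊤) (j : ZMod m) :
    ∃ n : ℤ, chi m x j * chi m x (-j) = n := by
  have hinv : ∀ t : (ZMod m)ˣ, ∀ j : ZMod m,
      chi m x (t * j) * chi m x (-(t * j)) = chi m x j * chi m x (-j) := by
    intro t
    have ht : t ∈ Subgroup.closure ({-1, r} : Set (ZMod m)ˣ) := by rw [hr]; trivial
    induction ht using Subgroup.closure_induction with
    | mem t ht =>
      rcases ht with rfl | rfl
      · intro j; simp [mul_comm]
      · intro j; rw [← mul_neg, chi_inv m x _ hx, chi_inv m x _ hx]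
    | one => simp
    | mul a b _ _ ha hb => intro j; rw [Units.val_mul, mul_assoc, ha, hb]
    | inv a _ ha =>
      intro j
      rw [← ha]; simp
  have hfix : ∀ τ : Gal(LL m/ℚ), τ (chi m x j * chi m x (-j)) = chi m x j * chi m x (-j) := by
    intro τ
    rw [map_mul, gal_chi, gal_chi, mul_neg, hinv]
  have : IsGalois ℚ (LL m) := IsCyclotomicExtension.isGalois {m} ℚ (LL m)
  have hmem := (IsGalois.mem_bot_iff_fixed (F := ℚ) (chi m x j * chi m x (-j))).2 hfix
  rw [IntermediateField.mem_bot] at hmem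
  obtain ⟨q, hq⟩ := hmem
  have hIntegral : IsIntegral ℤ q := by
    rw [← isIntegral_algebraMap_iff (algebraMap ℚ (LL m)).injective, hq]
    exact (chi_integral m x j).mul (chi_integral m x _)
  obtain ⟨n, hn⟩ := IsIntegrallyClosed.isIntegral_iff.1 hIntegral
  refine ⟨n, ?_⟩
  rw [← hq, ← hn]; simp

lemma trivial_of (x y : ZMod m → ℤ) (r : (ZMod m)ˣ) (hx : ∀ i, x (r * i) = x i)
    (hy : ∀ i, y (r * i) = y i)
    (hr : Subgroup.closure ({-1, r} : Set (ZMod m)ˣ) = ⊤)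
    (hxy : ∀ j, chi m x j = 0 ∨ chi m x j * chi m y j = 1) :
    x = 0 ∨ ∃ i, x = Pi.single i 1 ∨ x = Pi.single i (-1) := by
  choose n hn using chi_int m x r hx hr
  choose n' hn' using chi_int m y r hy hr
  have hle : ∀ j, n j ≤ 1 := by
    intro j
    have h : n j = 0 ∨ n j * n' j = 1 := by
      rcases hxy j with h | h
      · left; have := hn j; rw [h, zero_mul] at this; exact_mod_cast this.symm
      · rcases hxy (-j) with h' | h'
        · left; have := hn j; rw [h', mul_zero] at this; exact_mod_cast this.symm
        · right
          have : (n j : LL m) * n' j = 1 := by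
            rw [← hn, ← hn', mul_mul_mul_comm, h, h', one_mul]
          exact_mod_cast this
    rcases h with h | h
    · omega
    · rcases Int.eq_one_or_neg_one_of_mul_eq_one h with h | h <;> omega
  have hs : ∑ j, n j = m * ∑ i, x i ^ 2 := by
    have := sum_chi m x
    simp only [hn] at this
    exact_mod_cast this
  have h1 : ∑ j, n j ≤ m := by
    calc ∑ j, n j ≤ ∑ j : ZMod m, (1 : ℤ) := Finset.sum_le_sum fun j _ => hle j
      _ = m := by simp [ZMod.card]
  have hm0 : (0 : ℤ) < m := by exact_mod_cast NeZero.pos m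
  have h2 : ∑ i, x i ^ 2 ≤ 1 := by
    rw [hs] at h1; nlinarith
  by_cases h0 : x = 0
  · left; exact h0
  right
  obtain ⟨i, hi⟩ := Function.ne_iff.1 h0
  simp only [Pi.zero_apply] at hi
  have hsplit := Finset.add_sum_erase Finset.univ (fun i => x i ^ 2) (Finset.mem_univ i)
  have hi1 : 1 ≤ x i ^ 2 := by have := sq_pos_of_ne_zero hi; omega
  have hrest : ∑ i ∈ Finset.univ.erase i, x i ^ 2 = 0 :=
    le_antisymm (by omega) (Finset.sum_nonneg fun i _ => sq_nonneg _)
  have hz : ∀ b, b ≠ i → x b = 0 := by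
    intro b hb
    have := (Finset.sum_eq_zero_iff_of_nonneg (fun i _ => sq_nonneg (x i))).1 hrest b (by simp [hb])
    simpa using this
  have hsq : x i ^ 2 = 1 := by omega
  refine ⟨i, ?_⟩
  rcases Int.isUnit_iff.1 (IsUnit.of_mul_eq_one (x i) (by rw [← sq, hsq])) with h | h
  · left; funext b
    by_cases hb : b = i
    · subst hb; simp [h]
    · simp [hb, hz b hb]
  · right; funext b
    by_cases hb : b = i
    · subst hb; simp [h]
    · simp [hb, hz b hb]

end fourier
end CutAux
namespace CutAux
open LaurentPolynomial

lemma laurent_unit {F : Type*} [Field F] (p q : LaurentPolynomial F) (h : p * q = 1) :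
    ∃ k : ℤ, ∃ c : F, c ≠ 0 ∧ p = C c * T k := by
  obtain ⟨n, P, hP⟩ := LaurentPolynomial.exists_T_pow p
  obtain ⟨n', Q, hQ⟩ := LaurentPolynomial.exists_T_pow q
  have hPQ : P * Q = Polynomial.X ^ (n + n') := by
    apply Polynomial.toLaurent_injective
    rw [map_mul, hP, hQ, mul_mul_mul_comm, h, one_mul, ← T_add, map_pow, Polynomial.toLaurent_X, T_pow]
    simp
  have hdvd : P ∣ Polynomial.X ^ (n + n') := ⟨Q, hPQ.symm⟩
  obtain ⟨i, -, hi⟩ := (dvd_prime_pow Polynomial.prime_X _).1 hdvd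
  obtain ⟨w, hw⟩ := hi.symm
  obtain ⟨c, hc, hcw⟩ := Polynomial.isUnit_iff.1 w.isUnit
  refine ⟨i - n, c, hc.ne_zero, ?_⟩
  have h1 : p = (p * T n) * T (-n) := by rw [mul_assoc, ← T_add]; simp
  rw [h1, ← hP, ← hw, ← hcw, map_mul, map_pow, Polynomial.toLaurent_X, T_pow, Polynomial.toLaurent_C,
    mul_comm _ (C c), mul_assoc, ← T_add]
  simp [sub_eq_add_neg]

lemma coeff_CT {F : Type*} [Field F] (c : F) (k l : ℤ) :
    (C c * T k : LaurentPolynomial F).coeff l = if l = k then c else 0 := by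
  rw [← LaurentPolynomial.single_eq_C_mul_T, AddMonoidAlgebra.coeff_single]
  rw [Finsupp.single_apply]
  simp only [eq_comm]

lemma laurent_unit_coeff {F : Type*} [Field F] (p q : LaurentPolynomial F) (h : p * q = 1) :
    ∃ k : ℤ, (∀ l, l ≠ k → p.coeff l = 0) ∧ p.coeff k * q.coeff (-k) = 1 := by
  obtain ⟨k, c, hc, rfl⟩ := laurent_unit p q h
  have hq : q = C c⁻¹ * T (-k) := by
    have h2 : (C c * T k) * (C c⁻¹ * T (-k)) = 1 := by
      rw [mul_mul_mul_comm, ← map_mul, ← T_add, mul_inv_cancel₀ hc]; simp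
    have hu : IsUnit (C c * T k) := IsUnit.of_mul_eq_one _ h
    exact hu.mul_left_cancel (h.trans h2.symm)
  refine ⟨k, ?_, ?_⟩
  · intro l hl
    rw [coeff_CT, if_neg hl]
  · rw [hq, coeff_CT, coeff_CT]
    simp [hc]

section
variable {m : ℕ} [NeZero m] {r : (ZMod m)ˣ}

/-- slices of a group ring element -/
def slice (u : MonoidAlgebra ℤ (MG m r)) (k : ℤ) : ZMod m → ℤ := fun i => u.coeff ⟨i, k⟩

/-- the transform to Laurent polynomials -/
noncomputable def lau (r : (ZMod m)ˣ) (j : ZMod m) :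
    MonoidAlgebra ℤ (MG m r) →+ LaurentPolynomial (LL m) :=
  MonoidAlgebra.liftNC (Int.castAddHom _) (fun g => C (psi m (j * g.i)) * T g.k)

lemma lau_single (j : ZMod m) (g : MG m r) (n : ℤ) :
    lau r j (MonoidAlgebra.single g n) = (n : LaurentPolynomial (LL m)) * (C (psi m (j * g.i)) * T g.k) := by
  simp [lau, MonoidAlgebra.liftNC_single]

lemma lau_coeff (j : ZMod m) (u : MonoidAlgebra ℤ (MG m r)) (k : ℤ) :
    (lau r j u).coeff k = chi m (slice u k) j := by
  induction u using MonoidAlgebra.induction_linear with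
  | zero => simp [chi, slice]
  | add f g hf hg => simp [hf, hg, chi, slice, add_mul, Finset.sum_add_distrib]
  | single g n =>
    rw [lau_single, chi]
    have h1 : (n : LaurentPolynomial (LL m)) = C (n : LL m) := by simp
    rw [h1, ← mul_assoc, ← map_mul, coeff_CT]
    by_cases hk : g.k = k
    · subst hk
      rw [Finset.sum_eq_single g.i]
      · simp [slice]
      · intro b _ hb
        have : g ≠ ⟨b, g.k⟩ := fun h => hb (by rw [h])
        simp [slice, this]
      · simp
    · have : ∀ b, g ≠ ⟨b, k⟩ := fun b h => hk (by rw [h])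
      simp [slice, Ne.symm hk, this]

lemma lau_mul_gb (j : ZMod m) (u : MonoidAlgebra ℤ (MG m r)) (k : ℤ) :
    lau r j (u * MonoidAlgebra.single (gb r k) 1) = lau r j u * T k := by
  induction u using MonoidAlgebra.induction_linear with
  | zero => simp
  | add f g hf hg => simp [hf, hg, add_mul]
  | single g n =>
    rw [MonoidAlgebra.single_mul_single, lau_single, lau_single]
    simp only [gb, mul_k, mul_i, T_add, mul_zero, add_zero, mul_assoc, mul_one]

lemma lau_ga_mul (j : ZMod m) (u : MonoidAlgebra ℤ (MG m r)) (i : ZMod m) :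
    lau r j (MonoidAlgebra.single (ga r i) 1 * u) = C (psi m (j * i)) * lau r j u := by
  induction u using MonoidAlgebra.induction_linear with
  | zero => simp
  | add f g hf hg => simp [hf, hg, mul_add]
  | single g n =>
    rw [MonoidAlgebra.single_mul_single, lau_single, lau_single]
    simp [ga, mul_add, AddChar.map_add_eq_mul]
    ring

lemma lau_mul (j : ZMod m) (u v : MonoidAlgebra ℤ (MG m r))
    (hv : v ∈ Subring.center (MonoidAlgebra ℤ (MG m r))) :
    lau r j (u * v) = lau r j u * lau r j v := by
  rw [Subring.mem_center_iff] at hv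
  induction u using MonoidAlgebra.induction_linear with
  | zero => simp
  | add f g hf hg => simp [hf, hg, add_mul]
  | single g n =>
    have h1 : MonoidAlgebra.single g n = n • (MonoidAlgebra.single (ga r g.i) 1 *
        MonoidAlgebra.single (gb r g.k) (1 : ℤ)) := by
      rw [MonoidAlgebra.single_mul_single, ← eq_ab]; simp
    rw [lau_single, h1, smul_mul_assoc, map_zsmul, mul_assoc, lau_ga_mul, hv, lau_mul_gb, zsmul_eq_mul]
    ring

lemma slice_inv (u : MonoidAlgebra ℤ (MG m r))
    (hu : u ∈ Subring.center (MonoidAlgebra ℤ (MG m r))) (k : ℤ) (i : ZMod m) :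
    slice u k (r * i) = slice u k i := by
  rw [Subring.mem_center_iff] at hu
  have h := congrArg (fun w => w.coeff (gb r 1 * ⟨i, k⟩)) (hu (MonoidAlgebra.single (gb r 1) 1))
  simp only [MonoidAlgebra.coeff_single_mul_apply, MonoidAlgebra.coeff_mul_single_apply] at h
  rw [one_mul, mul_one, inv_mul_cancel_left] at h
  have e : gb r 1 * (⟨i, k⟩ : MG m r) * (gb r 1)⁻¹ = ⟨r * i, k⟩ := by
    ext <;> simp [gb]
  rw [e] at h
  exact h.symm

theorem cut_of_closure (hr : Subgroup.closure ({-1, r} : Set (ZMod m)ˣ) = ⊤) :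
    IsCutGroup (MG m r) := by
  intro u hu
  change u.1 ∈ _ at hu
  set x : MonoidAlgebra ℤ (MG m r) := u.1 with hx
  set y : MonoidAlgebra ℤ (MG m r) := u.2 with hy
  have hxy : x * y = 1 := u.3
  have hyx : y * x = 1 := u.4
  have hyc : y ∈ Subring.center (MonoidAlgebra ℤ (MG m r)) := by
    rw [Subring.mem_center_iff] at hu ⊢
    intro g
    calc g * y = y * x * (g * y) := by rw [hyx, one_mul]
      _ = y * (x * g) * y := by simp only [mul_assoc]
      _ = y * g * (x * y) := by rw [← hu]; simp only [mul_assoc]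
      _ = y * g := by rw [hxy, mul_one]
  have hlau : ∀ j, lau r j x * lau r j y = 1 := by
    intro j
    rw [← lau_mul j x y hyc, hxy, MonoidAlgebra.one_def, lau_single]
    simp
  have hcoef : ∀ j, ∃ k : ℤ, (∀ l, l ≠ k → chi m (slice x l) j = 0) ∧
      chi m (slice x k) j * chi m (slice y (-k)) j = 1 := by
    intro j
    simpa only [lau_coeff] using laurent_unit_coeff _ _ (hlau j)
  have htriv : ∀ k, slice x k = 0 ∨ ∃ i, slice x k = Pi.single i 1 ∨ slice x k = Pi.single i (-1) := by
    intro k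
    refine trivial_of m (slice x k) (slice y (-k)) r (slice_inv x hu k) (slice_inv y hyc _) hr ?_
    intro j
    obtain ⟨k', h1, h2⟩ := hcoef j
    by_cases hk : k = k'
    · subst hk; exact Or.inr h2
    · exact Or.inl (h1 k hk)
  obtain ⟨k, h1, h2⟩ := hcoef 0
  have hzero : ∀ l, l ≠ k → slice x l = 0 := by
    intro l hl
    have h := h1 l hl
    rcases htriv l with h0 | ⟨i, h0 | h0⟩
    · exact h0
    · rw [h0] at h
      simp [chi, Pi.single_apply] at h
    · rw [h0] at h
      simp [chi, Pi.single_apply] at h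
  have hx0 : slice x k ≠ 0 := by
    intro h0
    rw [h0] at h2
    simp [chi] at h2
  have key : ∀ i (e : ℤ), slice x k = Pi.single i e → x = MonoidAlgebra.single ⟨i, k⟩ e := by
    intro i e h
    ext ⟨i', k'⟩
    change slice x k' i' = _
    by_cases hk : k' = k
    · subst hk
      rw [h]
      by_cases hi : i' = i
      · subst hi; simp
      · simp [hi]
    · rw [hzero k' hk]
      have : (⟨i, k⟩ : MG m r) ≠ ⟨i', k'⟩ := fun h => hk (congrArg MG.k h).symm
      simp [this]
  rcases htriv k with h0 | ⟨i, h0 | h0⟩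
  · exact absurd h0 hx0
  · exact ⟨⟨i, k⟩, Or.inl (by rw [key i 1 h0]; rfl)⟩
  · exact ⟨⟨i, k⟩, Or.inr (by rw [key i (-1) h0]; simp)⟩

end
end CutAux
namespace CutAux
open NumberField

section
variable (m : ℕ) [NeZero m]

instance instGalLL : IsGalois ℚ (LL m) := IsCyclotomicExtension.isGalois {m} ℚ (LL m)

lemma conj_embed (Φ : LL m →+* ℂ) (x : LL m) :
    (starRingEnd ℂ) (Φ x) = Φ ((gal m).symm (-1) x) := by
  have hζ := IsCyclotomicExtension.zeta_spec m ℚ (LL m)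
  let f : LL m →ₐ[ℚ] ℂ := RingHom.toRatAlgHom ((starRingEnd ℂ).comp Φ)
  let g : LL m →ₐ[ℚ] ℂ := RingHom.toRatAlgHom (Φ.comp ((gal m).symm (-1)).toRingEquiv.toRingHom)
  have h : f = g := by
    apply (hζ.powerBasis ℚ).algHom_ext
    rw [IsPrimitiveRoot.powerBasis_gen]
    change (starRingEnd ℂ) (Φ _) = Φ ((gal m).symm (-1) _)
    set z := IsCyclotomicExtension.zeta m ℚ (LL m) with hz
    have hpow : z ^ m = 1 := hζ.pow_eq_one
    have h1 : z = psi m 1 := by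
      have := AddChar.zmodChar_apply' (IsCyclotomicExtension.zeta_pow m ℚ (LL m)) 1
      rw [pow_one] at this
      rw [Nat.cast_one] at this
      exact this.symm
    have hnorm : ‖Φ z‖ = 1 := by
      refine Complex.norm_eq_one_of_pow_eq_one (n := m) ?_ (NeZero.ne m)
      rw [← map_pow, hpow, map_one]
    have h2 : (gal m).symm (-1) z = z⁻¹ := by
      rw [h1, gal_psi, MulEquiv.apply_symm_apply, ← AddChar.map_neg_eq_inv]; simp
    rw [h2, map_inv₀]
    exact (Complex.inv_eq_conj hnorm).symm
  exact DFunLike.congr_fun h x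

lemma exists_inf_unit (K : Type*) [Field K] [NumberField K] [IsTotallyReal K]
    (hK : 2 ≤ Module.finrank ℚ K) : ∃ w : (𝓞 K)ˣ, ∀ n : ℕ, 0 < n → w ^ n ≠ 1 := by
  by_contra! hcon
  have hrank : 1 ≤ Units.rank K := by
    rw [Units.rank, InfinitePlace.card_eq_nrRealPlaces_add_nrComplexPlaces,
      ← IsTotallyReal.finrank K]
    omega
  have h0 : Module.finrank ℤ (Additive (𝓞 K)ˣ) = 0 := by
    apply Module.finrank_eq_zero_of_rank_eq_zero
    rw [rank_eq_zero_iff]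
    intro w
    obtain ⟨n, hn, h⟩ := hcon w.toMul
    refine ⟨n, by exact_mod_cast hn.ne', ?_⟩
    rw [natCast_zsmul]
    exact h
  rw [Units.finrank_eq] at h0
  omega

lemma exists_alpha_K (K : Type*) [Field K] [NumberField K] [IsTotallyReal K]
    (hK : 2 ≤ Module.finrank ℚ K) : ∃ a b : 𝓞 K, (1 + m * a) * (1 + m * b) = 1 ∧
      ∀ n : ℕ, 0 < n → (1 + m * a) ^ n ≠ 1 := by
  obtain ⟨w, hw⟩ := exists_inf_unit K hK
  let I : Ideal (𝓞 K) := Ideal.span {(m : 𝓞 K)}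
  have hI : I ≠ ⊥ := by
    simp [I, NeZero.ne m]
  have hfin : Finite (𝓞 K ⧸ I) := Ideal.finiteQuotientOfFreeOfNeBot I hI
  have hfo : IsOfFinOrder (Units.map (Ideal.Quotient.mk I).toMonoidHom w) := isOfFinOrder_of_finite _
  obtain ⟨N, hN, hpow⟩ := isOfFinOrder_iff_pow_eq_one.1 hfo
  have hmk : Ideal.Quotient.mk I ((w ^ N : (𝓞 K)ˣ) : 𝓞 K) = Ideal.Quotient.mk I 1 := by
    have := congrArg Units.val hpow
    simpa using this
  rw [Ideal.Quotient.eq, Ideal.mem_span_singleton] at hmk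
  obtain ⟨a, ha⟩ := hmk
  have ha' : 1 + m * a = ((w ^ N : (𝓞 K)ˣ) : 𝓞 K) := by rw [← ha]; ring
  refine ⟨a, -(((w ^ N)⁻¹ : (𝓞 K)ˣ) : 𝓞 K) * a, ?_, ?_⟩
  · have h1 : ((w ^ N : (𝓞 K)ˣ) : 𝓞 K) * (((w ^ N)⁻¹ : (𝓞 K)ˣ) : 𝓞 K) = 1 := Units.mul_inv _
    rw [ha']
    linear_combination ha - m * a * h1
  · intro n hn h
    rw [ha', ← Units.val_pow_eq_pow_val, Units.val_eq_one, ← pow_mul] at h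
    exact hw _ (by positivity) h

lemma exists_alpha (H : Subgroup (ZMod m)ˣ) (h1 : -1 ∈ H) (hH : H ≠ ⊤) :
    ∃ α β : LL m, IsIntegral ℤ α ∧ IsIntegral ℤ β ∧ (1 + m * α) * (1 + m * β) = 1 ∧
      (∀ τ : Gal(LL m/ℚ), gal m τ ∈ H → τ α = α) ∧
      ∀ n : ℕ, 0 < n → (1 + m * α) ^ n ≠ 1 := by
  let H' : Subgroup Gal(LL m/ℚ) := H.comap (gal m).toMonoidHom
  let K : IntermediateField ℚ (LL m) := IntermediateField.fixedField H'
  have hbot : K ≠ ⊥ := by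
    intro hK
    apply hH
    have h2 : IntermediateField.fixingSubgroup K = H' :=
      IntermediateField.fixingSubgroup_fixedField H'
    rw [hK, IntermediateField.fixingSubgroup_bot] at h2
    rw [Subgroup.eq_top_iff']
    intro t
    have : gal m ((gal m).symm t) ∈ H := by
      change (gal m).symm t ∈ H'
      rw [← h2]; trivial
    simpa using this
  have hdeg : 2 ≤ Module.finrank ℚ K := by
    have hpos : 0 < Module.finrank ℚ K := Module.finrank_pos
    have hne : Module.finrank ℚ K ≠ 1 := fun h => hbot (IntermediateField.finrank_eq_one_iff.1 h)
    omega
  have hreal : IsTotallyReal K := by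
    constructor
    intro w
    obtain ⟨W, rfl⟩ : ∃ W : InfinitePlace (LL m), W.comap (algebraMap K (LL m)) = w :=
      InfinitePlace.comap_surjective w
    rw [← InfinitePlace.mk_embedding W, InfinitePlace.comap_mk, InfinitePlace.isReal_mk_iff,
      ComplexEmbedding.isReal_iff]
    ext x
    rw [ComplexEmbedding.conjugate_coe_eq]
    rw [RingHom.comp_apply, conj_embed]
    congr 1
    have hx : ∀ τ ∈ H', τ (x : LL m) = x := (IntermediateField.mem_fixedField_iff H' x.1).1 x.2
    exact hx _ (by change gal m _ ∈ H; simpa using h1)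
  obtain ⟨a, b, hab, hn⟩ := exists_alpha_K m K hdeg
  let F : 𝓞 K →+* LL m := (algebraMap K (LL m)).comp (algebraMap (𝓞 K) K)
  have hF : Function.Injective F :=
    (algebraMap K (LL m)).injective.comp (RingOfIntegers.coe_injective)
  refine ⟨F a, F b, ?_, ?_, ?_, ?_, ?_⟩
  · exact (RingOfIntegers.isIntegral a).map (F.toIntAlgHom)
  · exact (RingOfIntegers.isIntegral b).map (F.toIntAlgHom)
  · have := congrArg F hab
    simpa using this
  · intro τ hτ
    exact (IntermediateField.mem_fixedField_iff H' _).1 (algebraMap (𝓞 K) K a).2 τ hτ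
  · intro n hn0 h
    apply hn n hn0
    apply hF
    simpa using h

open scoped Classical in
lemma orth (τ τ' : Gal(LL m/ℚ)) :
    ∑ i, τ (psi m (-i)) * τ' (psi m i) = if τ' = τ then (m : LL m) else 0 := by
  have h : ∀ i, τ (psi m (-i)) * τ' (psi m i) =
      psi m (i * ((gal m τ' : ZMod m) - (gal m τ : ZMod m))) := by
    intro i
    rw [gal_psi, gal_psi, ← AddChar.map_add_eq_mul]; congr 1; ring
  simp only [h]
  rw [AddChar.sum_mulShift _ (psi_primitive m)]
  have : (gal m τ' : ZMod m) - (gal m τ : ZMod m) = 0 ↔ τ' = τ := by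
    rw [sub_eq_zero, Units.val_inj, (gal m).injective.eq_iff]
  by_cases h : τ' = τ <;> simp [this, h, ZMod.card]

lemma exists_coeff (α : LL m) (hα : IsIntegral ℤ α) :
    ∃ c : ZMod m → ℤ, ∀ i, (c i : LL m) = ∑ τ : Gal(LL m/ℚ), τ (α * psi m (-i)) := by
  have : ∀ i, ∃ n : ℤ, (n : LL m) = ∑ τ : Gal(LL m/ℚ), τ (α * psi m (-i)) := by
    intro i
    have hIntegral : IsIntegral ℤ (Algebra.trace ℚ (LL m) (α * psi m (-i))) :=
      Algebra.isIntegral_trace (hα.mul (psi_integral m _))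
    obtain ⟨n, hn⟩ := IsIntegrallyClosed.isIntegral_iff.1 hIntegral
    refine ⟨n, ?_⟩
    rw [← trace_eq_sum_automorphisms, ← hn]; simp
  choose c hc using this
  exact ⟨c, hc⟩

lemma conv (α β : LL m) (c d : ZMod m → ℤ)
    (hc : ∀ i, (c i : LL m) = ∑ τ : Gal(LL m/ℚ), τ (α * psi m (-i)))
    (hd : ∀ i, (d i : LL m) = ∑ τ : Gal(LL m/ℚ), τ (β * psi m (-i))) (s : ZMod m) :
    ∑ i, (c i : LL m) * d (s - i) = ∑ τ : Gal(LL m/ℚ), τ (m * α * β * psi m (-s)) := by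
  have h1 : ∀ i, (c i : LL m) * d (s - i) = ∑ τ : Gal(LL m/ℚ), ∑ τ' : Gal(LL m/ℚ),
      τ α * τ' β * τ' (psi m (-s)) * (τ (psi m (-i)) * τ' (psi m i)) := by
    intro i
    rw [hc, hd, Finset.sum_mul_sum]
    refine Finset.sum_congr rfl fun τ _ => Finset.sum_congr rfl fun τ' _ => ?_
    rw [show -(s - i) = -s + i by ring, AddChar.map_add_eq_mul]
    simp only [map_mul]; ring
  simp only [h1]
  rw [Finset.sum_comm]
  refine Finset.sum_congr rfl fun τ _ => ?_
  rw [Finset.sum_comm]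
  simp only [← Finset.mul_sum, orth]
  rw [Finset.sum_eq_single τ]
  · simp only [map_mul, if_true, map_natCast]; ring
  · intro b _ hb; simp [hb]
  · simp

lemma recover (α : LL m) (c : ZMod m → ℤ)
    (hc : ∀ i, (c i : LL m) = ∑ τ : Gal(LL m/ℚ), τ (α * psi m (-i))) :
    ∑ i, (c i : LL m) * psi m i = m * α := by
  have h1 : ∀ i, (c i : LL m) * psi m i = ∑ τ : Gal(LL m/ℚ),
      τ α * (τ (psi m (-i)) * (1 : Gal(LL m/ℚ)) (psi m i)) := by
    intro i
    rw [hc, Finset.sum_mul]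
    refine Finset.sum_congr rfl fun τ _ => ?_
    simp only [map_mul, AlgEquiv.one_apply]; ring
  simp only [h1]
  rw [Finset.sum_comm]
  simp only [← Finset.mul_sum, orth]
  rw [Finset.sum_eq_single 1]
  · simp; ring
  · intro b _ hb; simp [hb.symm]
  · simp

variable {m} {r : (ZMod m)ˣ}

/-- embedding functions on `ZMod m` in the group ring -/
noncomputable def emb (r : (ZMod m)ˣ) (c : ZMod m → ℤ) : MonoidAlgebra ℤ (MG m r) :=
  ∑ i, MonoidAlgebra.single (ga r i) (c i)

lemma ga_mul (i j : ZMod m) : ga r i * ga r j = ga r (i + j) := by ext <;> simp [ga]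

lemma emb_mul (c d : ZMod m → ℤ) :
    emb r c * emb r d = emb r (fun s => ∑ i, c i * d (s - i)) := by
  unfold emb
  rw [Finset.sum_mul_sum]
  have : ∀ s, MonoidAlgebra.single (ga r s) (∑ i, c i * d (s - i)) =
      ∑ i, MonoidAlgebra.single (ga r s) (c i * d (s - i)) := by
    intro s
    exact map_sum (MonoidAlgebra.singleAddHom (ga r s)) _ _
  simp only [this]
  rw [Finset.sum_comm (f := fun s i => MonoidAlgebra.single (ga r s) (c i * d (s - i)))]
  refine Finset.sum_congr rfl fun i _ => ?_
  conv_rhs => rw [← Equiv.sum_comp (Equiv.addLeft i)]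
  refine Finset.sum_congr rfl fun j _ => ?_
  rw [MonoidAlgebra.single_mul_single, ga_mul]
  simp

lemma emb_add (c d : ZMod m → ℤ) : emb r (c + d) = emb r c + emb r d := by
  simp [emb, MonoidAlgebra.single_add, Finset.sum_add_distrib]

lemma emb_zero : emb r (0 : ZMod m → ℤ) = 0 := by simp [emb]

lemma emb_coeff (c : ZMod m → ℤ) (i : ZMod m) : (emb r c).coeff (ga r i) = c i := by
  classical
  have : ∀ j, ga r j = ga r i ↔ j = i := fun j => ⟨fun h => congrArg MG.i h, fun h => by rw [h]⟩
  simp [emb, MonoidAlgebra.coeff_sum, Finsupp.single_apply, this]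

lemma emb_central (c : ZMod m → ℤ) (hc : ∀ k : ℤ, ∀ i, c ((r ^ k : (ZMod m)ˣ) * i) = c i) :
    emb r c ∈ Subring.center (MonoidAlgebra ℤ (MG m r)) := by
  rw [Subring.mem_center_iff]
  intro u
  induction u using MonoidAlgebra.induction_linear with
  | zero => simp
  | add f g hf hg => rw [add_mul, mul_add, hf, hg]
  | single g n =>
    unfold emb
    rw [Finset.mul_sum, Finset.sum_mul]
    conv_rhs => rw [← Equiv.sum_comp (Units.mulLeft (r ^ g.k))]
    refine Finset.sum_congr rfl fun i _ => ?_
    rw [MonoidAlgebra.single_mul_single, MonoidAlgebra.single_mul_single, Units.mulLeft_apply, hc,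
      mul_comm n]
    congr 1
    ext <;> simp [ga, add_comm]

theorem closure_of_cut (hcut : IsCutGroup (MG m r)) :
    Subgroup.closure ({-1, r} : Set (ZMod m)ˣ) = ⊤ := by
  by_contra hH
  set H := Subgroup.closure ({-1, r} : Set (ZMod m)ˣ) with hHdef
  have hneg : -1 ∈ H := Subgroup.subset_closure (by simp)
  have hrH : r ∈ H := Subgroup.subset_closure (by simp)
  obtain ⟨α, β, hα, hβ, hab, hfix, hinf⟩ := exists_alpha m H hneg hH
  obtain ⟨c, hc⟩ := exists_coeff m α hα
  obtain ⟨d, hd⟩ := exists_coeff m β hβ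
  have hm0 : (m : LL m) ≠ 0 := by exact_mod_cast NeZero.ne m
  have hab' : α + β + m * α * β = 0 := by
    apply mul_left_cancel₀ hm0
    linear_combination hab
  have hsum : c + d + (fun s => ∑ i, c i * d (s - i)) = 0 := by
    funext s
    have : ((c s + d s + ∑ i, c i * d (s - i) : ℤ) : LL m) = 0 := by
      push_cast
      rw [conv m α β c d hc hd s, hc, hd, ← Finset.sum_add_distrib, ← Finset.sum_add_distrib]
      refine Finset.sum_eq_zero fun τ _ => ?_
      rw [← map_add, ← map_add, ← add_mul, ← add_mul, hab', zero_mul, map_zero]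
    exact_mod_cast this
  have hsum' : d + c + (fun s => ∑ i, d i * c (s - i)) = 0 := by
    funext s
    have : ((d s + c s + ∑ i, d i * c (s - i) : ℤ) : LL m) = 0 := by
      push_cast
      rw [conv m β α d c hd hc s, hc, hd, ← Finset.sum_add_distrib, ← Finset.sum_add_distrib]
      refine Finset.sum_eq_zero fun τ _ => ?_
      rw [← map_add, ← map_add, ← add_mul, ← add_mul,
        show β + α + m * β * α = 0 by rw [← hab']; ring, zero_mul, map_zero]
    exact_mod_cast this
  have key : ∀ c d : ZMod m → ℤ, c + d + (fun s => ∑ i, c i * d (s - i)) = 0 →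
      (1 + emb r c) * (1 + emb r d) = 1 := by
    intro c d h
    have := congrArg (emb r) h
    rw [emb_add, emb_add, ← emb_mul, emb_zero] at this
    rw [add_mul, one_mul, mul_add, mul_one]
    calc _ = 1 + (emb r c + emb r d + emb r c * emb r d) := by abel
      _ = 1 := by rw [this, add_zero]
  let u : (MonoidAlgebra ℤ (MG m r))ˣ := ⟨1 + emb r c, 1 + emb r d, key c d hsum, key d c hsum'⟩
  have hinv : ∀ k : ℤ, ∀ i, c ((r ^ k : (ZMod m)ˣ) * i) = c i := by
    intro k i
    have hmem : (r ^ k) ∈ H := H.zpow_mem hrH k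
    have : (c ((r ^ k : (ZMod m)ˣ) * i) : LL m) = c i := by
      rw [hc, hc]
      set σ := (gal m).symm (r ^ k) with hσ
      have hg : gal m σ = r ^ k := by simp [hσ]
      have hσα : σ α = α := hfix σ (by rw [hg]; exact hmem)
      have e : α * psi m (-((r ^ k : (ZMod m)ˣ) * i)) = σ (α * psi m (-i)) := by
        rw [map_mul, hσα, gal_psi, hg, mul_neg]
      rw [e]
      rw [← Equiv.sum_comp (Equiv.mulRight σ) (fun τ : Gal(LL m/ℚ) => τ (α * psi m (-i)))]
      rfl
    exact_mod_cast this
  obtain ⟨g, hg⟩ := hcut u (Subring.add_mem _ (Subring.one_mem _) (emb_central c hinv))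
  have hg' : ∃ e : ℤ, (e = 1 ∨ e = -1) ∧ 1 + emb r c = MonoidAlgebra.single g e := by
    rcases hg with hg | hg
    · exact ⟨1, Or.inl rfl, hg⟩
    · refine ⟨-1, Or.inr rfl, ?_⟩
      rw [MonoidAlgebra.single_neg]; exact hg
  obtain ⟨e, he, hge⟩ := hg'
  have hsum1 : ∑ i, (((1 + emb r c).coeff (ga r i) : ℤ) : LL m) * psi m i = 1 + m * α := by
    simp only [MonoidAlgebra.coeff_add, Finsupp.add_apply, emb_coeff, Int.cast_add, add_mul,
      Finset.sum_add_distrib, recover m α c hc]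
    congr 1
    rw [Finset.sum_eq_single 0]
    · have : ga r 0 = 1 := rfl
      rw [this]; simp
    · intro b _ hb
      have : (1 : MG m r) ≠ ga r b := fun h => hb (congrArg MG.i h).symm
      simp [MonoidAlgebra.one_def, this]
    · simp
  rw [hge] at hsum1
  have hval : 1 + m * α = 0 ∨ 1 + m * α = e * psi m g.i := by
    by_cases hk : g.k = 0
    · right
      have hgg : g = ga r g.i := by ext <;> simp [ga, hk]
      rw [← hsum1, Finset.sum_eq_single g.i]
      · rw [← hgg]; simp
      · intro b _ hb
        have : g ≠ ga r b := fun h => hb (congrArg MG.i h).symm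
        simp [this]
      · simp
    · left
      rw [← hsum1]
      refine Finset.sum_eq_zero fun i _ => ?_
      have : g ≠ ga r i := fun h => hk (congrArg MG.k h)
      simp [this]
  rcases hval with h0 | h0
  · rw [h0, zero_mul] at hab; exact zero_ne_one hab
  · apply hinf (2 * m) (by have := NeZero.pos m; omega)
    have he2 : (e : LL m) ^ 2 = 1 := by rcases he with rfl | rfl <;> simp
    rw [h0, mul_pow, pow_mul, he2, one_pow, mul_comm 2 m, pow_mul, psi_pow, one_pow, one_mul]

end
end CutAux

/-- For an integer `m ≥ 3` and a unit `r ≠ 1` of `ℤ/mℤ`, the group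
`G = (ℤ/mℤ) ⋊ ℤ = ⟨a, b | aᵐ = 1, b a b⁻¹ = aʳ⟩` is a cut-group if and only if the unit
group `(ℤ/mℤ)ˣ` is generated by `{-1, r}`. -/
theorem isCutGroup_cm_semidirect_z_iff (m : ℕ) (hm : 3 ≤ m) (r : (ZMod m)ˣ) (hr : r ≠ 1) :
    IsCutGroup (PresentedGroup (metacyclicRelsCmSemidirectZ m r)) ↔
      Subgroup.closure ({-1, r} : Set (ZMod m)ˣ) = ⊤ := by
  have : NeZero m := ⟨by omega⟩
  constructor
  · intro h
    exact CutAux.closure_of_cut (CutAux.isCut_of_equiv CutAux.isoMG h)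
  · intro h
    exact CutAux.isCut_of_equiv CutAux.isoMG.symm (CutAux.cut_of_closure h)
end

section
/- Let G be a finite p-group and A a nontrivial normal subgroup of G. Then A is an RS-subgroup of G if and only if one of the following holds: (i) p = 2 and for every a ∈ A, a³ is conjugate in G to a or to a⁻¹; (ii) p = 3 and for every a ∈ A, a² is conjugate in G to a⁻¹. -/
theorem conj_pow_aux {G : Type*} [Group G] {a : G} {c : ℕ}
    (h : IsConj (a ^ c) a ∨ IsConj (a ^ c) a⁻¹) (k : ℕ) :
    IsConj (a ^ (c ^ k)) a ∨ IsConj (a ^ (c ^ k)) a⁻¹ := by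
  have hinv : ∀ x y : G, IsConj x y → IsConj x⁻¹ y⁻¹ := by
    intro x y hxy
    rw [isConj_iff] at hxy ⊢
    obtain ⟨g, rfl⟩ := hxy
    exact ⟨g, by group⟩
  induction k with
  | zero => left; rw [pow_zero, pow_one]
  | succ k ih =>
    rw [pow_succ, pow_mul]
    rcases ih with ih | ih
    · have := ih.pow c
      rcases h with h | h
      · exact Or.inl (this.trans h)
      · exact Or.inr (this.trans h)
    · have := ih.pow c
      rw [inv_pow] at this
      rcases h with h | h
      · exact Or.inr (this.trans (hinv _ _ h))
      · left
        have h2 := hinv _ _ h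
        rw [inv_inv] at h2
        exact this.trans h2

theorem conj_of_dvd_aux {G : Type*} [Group G] {a : G} {c : ℕ}
    (h : IsConj (a ^ c) a ∨ IsConj (a ^ c) a⁻¹) (k j : ℕ)
    (hd : (orderOf a : ℤ) ∣ j - c ^ k ∨ (orderOf a : ℤ) ∣ j + c ^ k) :
    IsConj (a ^ j) a ∨ IsConj (a ^ j) a⁻¹ := by
  have h1 := conj_pow_aux h k
  rcases hd with hd | hd
  · have : a ^ j = a ^ (c ^ k) := by
      have h2 := orderOf_dvd_iff_zpow_eq_one.1 hd
      rw [zpow_sub, mul_inv_eq_one] at h2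
      exact_mod_cast h2
    rwa [this]
  · have : a ^ j = (a ^ (c ^ k))⁻¹ := by
      have h2 := orderOf_dvd_iff_zpow_eq_one.1 hd
      rw [zpow_add, mul_eq_one_iff_eq_inv] at h2
      exact_mod_cast h2
    rw [this]
    have hinv : ∀ x y : G, IsConj x y → IsConj x⁻¹ y⁻¹ := by
      intro x y hxy
      rw [isConj_iff] at hxy ⊢
      obtain ⟨g, rfl⟩ := hxy
      exact ⟨g, by group⟩
    rcases h1 with h1 | h1
    · exact Or.inr (hinv _ _ h1)
    · left
      simpa using hinv _ _ h1

theorem three_pow_two_pow (n : ℕ) : ∃ u : ℤ, (3 : ℤ) ^ (2 ^ (n + 1)) = 1 + 2 ^ (n + 3) * (2 * u + 1) := by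
  induction n with
  | zero => exact ⟨0, by norm_num⟩
  | succ n ih =>
    obtain ⟨u, hu⟩ := ih
    refine ⟨u + 2 ^ (n + 1) * (2 * u + 1) ^ 2, ?_⟩
    rw [pow_succ 2 (n + 1), pow_mul, hu]
    ring

theorem four_pow_three_pow (n : ℕ) : ∃ u : ℤ, (4 : ℤ) ^ (3 ^ n) = 1 + 3 ^ (n + 1) * (3 * u + 1) := by
  induction n with
  | zero => exact ⟨0, by norm_num⟩
  | succ n ih =>
    obtain ⟨u, hu⟩ := ih
    refine ⟨u + 3 ^ n * (3 * u + 1) ^ 2 + 3 ^ n * 3 ^ n * (3 * u + 1) ^ 3, ?_⟩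
    rw [pow_succ 3 n, pow_mul, hu]
    ring

theorem exists_two (n : ℕ) (j : ℤ) (hj : j % 2 = 1) :
    ∃ k : ℕ, (2 : ℤ) ^ (n + 3) ∣ j - 3 ^ k ∨ (2 : ℤ) ^ (n + 3) ∣ j + 3 ^ k := by
  induction n with
  | zero =>
    have : j % 8 = 1 ∨ j % 8 = 3 ∨ j % 8 = 5 ∨ j % 8 = 7 := by omega
    rcases this with h | h | h | h
    · exact ⟨0, Or.inl (by norm_num; omega)⟩
    · exact ⟨1, Or.inl (by norm_num; omega)⟩
    · exact ⟨1, Or.inr (by norm_num; omega)⟩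
    · exact ⟨0, Or.inr (by norm_num; omega)⟩
  | succ n ih =>
    obtain ⟨k, hk⟩ := ih
    obtain ⟨u, hu⟩ := three_pow_two_pow n
    obtain ⟨w, hw⟩ : Odd ((3 : ℤ) ^ k) := Odd.pow (by decide)
    rcases hk with ⟨v, hv⟩ | ⟨v, hv⟩
    · rcases Int.even_or_odd' v with ⟨s, rfl | rfl⟩
      · exact ⟨k, Or.inl ⟨s, by rw [hv]; ring⟩⟩
      · refine ⟨k + 2 ^ (n + 1), Or.inl ⟨s - w - u - 2 * w * u, ?_⟩⟩
        rw [pow_add, hu, eq_add_of_sub_eq hv, hw]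
        ring
    · rcases Int.even_or_odd' v with ⟨s, rfl | rfl⟩
      · exact ⟨k, Or.inr ⟨s, by rw [hv]; ring⟩⟩
      · refine ⟨k + 2 ^ (n + 1), Or.inr ⟨s + w + u + 2 * w * u + 1, ?_⟩⟩
        rw [pow_add, hu, eq_sub_of_add_eq hv, hw]
        ring

theorem exists_three (n : ℕ) (j : ℤ) (hj : j % 3 ≠ 0) :
    ∃ k : ℕ, (3 : ℤ) ^ (n + 1) ∣ j - 2 ^ k := by
  induction n with
  | zero =>
    have : j % 3 = 1 ∨ j % 3 = 2 := by omega
    rcases this with h | h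
    · exact ⟨0, by norm_num; omega⟩
    · exact ⟨1, by norm_num; omega⟩
  | succ n ih =>
    obtain ⟨k, v, hv⟩ := ih
    obtain ⟨u, hu⟩ := four_pow_three_pow n
    have h4 : ∀ t : ℕ, (2 : ℤ) ^ (k + 2 * 3 ^ n * t) = 2 ^ k * (1 + 3 ^ (n + 1) * (3 * u + 1)) ^ t := by
      intro t
      rw [← hu, pow_add, pow_mul, pow_mul]; norm_num
    have h3 : ¬ (3 : ℤ) ∣ 2 ^ k := fun h => by
      have := Int.prime_three.dvd_of_dvd_pow h
      omega
    have hcases : v % 3 = 0 ∨ (v - 2 ^ k) % 3 = 0 ∨ (v - 2 * 2 ^ k) % 3 = 0 := by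
      generalize (2 : ℤ) ^ k = w at h3
      have hw : w % 3 = 1 ∨ w % 3 = 2 := by omega
      have hv3 : v % 3 = 0 ∨ v % 3 = 1 ∨ v % 3 = 2 := by omega
      rcases hw with hw | hw <;> rcases hv3 with h | h | h <;> omega
    rcases hcases with h | h | h
    · obtain ⟨s, rfl⟩ := Int.dvd_of_emod_eq_zero h
      exact ⟨k, s, by rw [hv]; ring⟩
    · obtain ⟨s, hs⟩ := Int.dvd_of_emod_eq_zero h
      refine ⟨k + 2 * 3 ^ n * 1, s - 2 ^ k * u, ?_⟩
      rw [h4, eq_add_of_sub_eq hv, eq_add_of_sub_eq hs]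
      ring
    · obtain ⟨s, hs⟩ := Int.dvd_of_emod_eq_zero h
      refine ⟨k + 2 * 3 ^ n * 2, s - 2 * 2 ^ k * u - 2 ^ k * 3 ^ n * (3 * u + 1) ^ 2, ?_⟩
      rw [h4, eq_add_of_sub_eq hv, eq_add_of_sub_eq hs]
      ring

theorem eq_one_of_sq_conj {G : Type*} [Group G] [Finite G] (hG : IsPGroup 3 G) (a : G)
    (h : IsConj (a ^ 2) a) : a = 1 := by
  obtain ⟨g, hg⟩ := isConj_iff.1 h.symm
  have key : ∀ n : ℕ, g ^ n * a * (g ^ n)⁻¹ = a ^ (2 ^ n) := by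
    intro n
    induction n with
    | zero => simp
    | succ n ih =>
      have : g ^ (n + 1) * a * (g ^ (n + 1))⁻¹ = g ^ n * (g * a * g⁻¹) * (g ^ n)⁻¹ := by
        rw [pow_succ]; group
      rw [this, hg, ← conj_pow, ih, ← pow_mul, pow_succ]
  obtain ⟨m, hm⟩ := hG g
  have h1 := key (3 ^ m)
  rw [hm] at h1
  simp only [one_mul, inv_one, mul_one] at h1
  obtain ⟨r, hr⟩ := hG a
  by_contra hne
  haveI : Fact (Nat.Prime 3) := ⟨Nat.prime_three⟩
  have h3 : 3 ∣ orderOf a := by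
    obtain ⟨s, -, hs⟩ := (Nat.dvd_prime_pow Nat.prime_three).1 (orderOf_dvd_of_pow_eq_one hr)
    rw [hs]
    apply dvd_pow_self
    rintro rfl
    exact hne (orderOf_eq_one_iff.1 (by simpa using hs))
  have h5 : a ^ ((2 : ℤ) ^ (3 ^ m) - 1) = 1 := by
    rw [zpow_sub, mul_inv_eq_one, zpow_one]
    exact_mod_cast h1.symm
  have h6 := orderOf_dvd_iff_zpow_eq_one.2 h5
  have h7 : (3 : ℤ) ∣ 2 ^ (3 ^ m) - 1 := dvd_trans (by exact_mod_cast h3) h6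
  have h8 : (3 : ℤ) ∣ 2 ^ (3 ^ m) + 1 := by
    have := Odd.add_dvd_pow_add_pow (2 : ℤ) 1 (n := 3 ^ m) (Odd.pow (by decide))
    simpa using this
  omega

/-- A nontrivial normal subgroup `A` of a finite `p`-group `G` is an RS-subgroup of `G` if
and only if either `p = 2` and `a³ ∼ a^{±1}` for all `a ∈ A`, or `p = 3` and `a² ∼ a⁻¹`
for all `a ∈ A`. -/
theorem isRSSubgroup_iff_of_pGroup {p : ℕ} (hp : p.Prime) {G : Type*} [Group G] [Finite G]
    (hG : IsPGroup p G) (A : Subgroup G) [A.Normal] (hA : A ≠ ⊥) :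
    IsRSSubgroup A ↔
      (p = 2 ∧ ∀ a ∈ A, IsConj (a ^ 3) a ∨ IsConj (a ^ 3) a⁻¹) ∨
      (p = 3 ∧ ∀ a ∈ A, IsConj (a ^ 2) a⁻¹) := by
  haveI : Fact p.Prime := ⟨hp⟩
  constructor
  · intro hRS
    have hRS' : ∀ a ∈ A, IsRSElement a := fun a ha => hRS a ha (isOfFinOrder_of_finite a)
    have hcop : ∀ (a : G) (j : ℕ), Nat.Coprime j p → Nat.Coprime j (orderOf a) := by
      intro a j hj
      obtain ⟨r, hr⟩ := hG a
      exact Nat.Coprime.coprime_dvd_right (orderOf_dvd_of_pow_eq_one hr) (hj.pow_right r)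
    by_cases h2 : p = 2
    · left
      refine ⟨h2, fun a ha => hRS' a ha 3 (by norm_num) (hcop a 3 ?_)⟩
      subst h2; decide
    have hc2 : Nat.Coprime 2 p := (Nat.coprime_primes Nat.prime_two hp).2 (Ne.symm h2)
    by_cases h3 : p = 3
    · right
      subst h3
      refine ⟨rfl, fun a ha => ?_⟩
      rcases hRS' a ha 2 (by norm_num) (hcop a 2 hc2) with h | h
      · have := eq_one_of_sq_conj hG a h
        subst this
        simp
      · exact h
    exfalso
    obtain ⟨z, hzA, hzc, hz1⟩ : ∃ z ∈ A, z ∈ Subgroup.center G ∧ z ≠ 1 := by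
      by_contra hcon
      push Not at hcon
      haveI : Nontrivial A := (Subgroup.nontrivial_iff_ne_bot A).2 hA
      have hcA : p ∣ Nat.card A := by
        obtain ⟨n, hn0, hn⟩ := (hG.to_subgroup A).nontrivial_iff_card.1 inferInstance
        rw [hn]; exact dvd_pow_self p (by omega)
      have hGc : IsPGroup p (ConjAct G) := hG.of_equiv ConjAct.toConjAct
      have h1 : (1 : A) ∈ MulAction.fixedPoints (ConjAct G) A := by
        intro g
        exact smul_one g
      obtain ⟨b, hb, hb1⟩ := hGc.exists_fixed_point_of_prime_dvd_card_of_fixed_point A hcA h1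
      apply hb1
      symm
      apply Subtype.ext
      refine hcon b b.2 ?_
      rw [Subgroup.mem_center_iff]
      intro g
      have h5 := congrArg Subtype.val (hb (ConjAct.toConjAct g))
      rw [ConjAct.Subgroup.val_conj_smul, ConjAct.toConjAct_smul] at h5
      exact mul_inv_eq_iff_eq_mul.1 h5
    have hconj : ∀ x y : G, y ∈ Subgroup.center G → IsConj x y → x = y := by
      intro x y hy hxy
      obtain ⟨g, hg⟩ := isConj_iff.1 hxy.symm
      rw [← hg, Subgroup.mem_center_iff.1 hy g]
      group
    rcases hRS' z hzA 2 (by norm_num) (hcop z 2 hc2) with h | h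
    · have := hconj _ _ hzc h
      rw [pow_two] at this
      exact hz1 (mul_eq_left.1 this)
    · have := hconj _ _ (inv_mem hzc) h
      have h33 : z ^ 3 = 1 := by rw [pow_succ, this]; group
      have hc3 : Nat.Coprime 3 p := (Nat.coprime_primes Nat.prime_three hp).2 (Ne.symm h3)
      have := Nat.Coprime.eq_one_of_dvd (hcop z 3 hc3).symm (orderOf_dvd_of_pow_eq_one h33)
      exact hz1 (orderOf_eq_one_iff.1 this)
  · rintro (⟨rfl, h⟩ | ⟨rfl, h⟩) a ha - j hj hcop
    · by_cases ha1 : a = 1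
      · subst ha1; simp
      obtain ⟨n, hn⟩ := hG a
      have hdvd := orderOf_dvd_of_pow_eq_one hn
      have hp2 : 2 ∣ orderOf a := by
        obtain ⟨s, -, hs⟩ := (Nat.dvd_prime_pow Nat.prime_two).1 hdvd
        rw [hs]
        apply dvd_pow_self
        rintro rfl
        exact ha1 (orderOf_eq_one_iff.1 (by simpa using hs))
      have hodd : (j : ℤ) % 2 = 1 := by
        have : Odd j := Nat.coprime_two_right.1 (Nat.Coprime.coprime_dvd_right hp2 hcop)
        have := Nat.odd_iff.1 this
        omega
      have hd : (orderOf a : ℤ) ∣ 2 ^ (n + 3) := by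
        exact_mod_cast hdvd.trans (pow_dvd_pow 2 (by omega))
      obtain ⟨k, hk⟩ := exists_two n j hodd
      exact conj_of_dvd_aux (h a ha) k j
        (hk.imp (fun h => by exact_mod_cast hd.trans h) (fun h => by exact_mod_cast hd.trans h))
    · by_cases ha1 : a = 1
      · subst ha1; simp
      obtain ⟨n, hn⟩ := hG a
      have hdvd := orderOf_dvd_of_pow_eq_one hn
      have hp3 : 3 ∣ orderOf a := by
        obtain ⟨s, -, hs⟩ := (Nat.dvd_prime_pow Nat.prime_three).1 hdvd
        rw [hs]
        apply dvd_pow_self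
        rintro rfl
        exact ha1 (orderOf_eq_one_iff.1 (by simpa using hs))
      have h3 : (j : ℤ) % 3 ≠ 0 := by
        have h4 : Nat.Coprime j 3 := Nat.Coprime.coprime_dvd_right hp3 hcop
        have := (Nat.Prime.coprime_iff_not_dvd Nat.prime_three).1 h4.symm
        omega
      have hd : (orderOf a : ℤ) ∣ 3 ^ (n + 1) := by
        exact_mod_cast hdvd.trans (pow_dvd_pow 3 (by omega))
      obtain ⟨k, hk⟩ := exists_three n j h3
      exact conj_of_dvd_aux (Or.inr (h a ha)) k j (Or.inl (by exact_mod_cast hd.trans hk))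
end

section
/- Let G be a finite nilpotent group and A a normal subgroup of G which is an RS-subgroup of G. Then every prime dividing the order of A belongs to {2, 3}. -/
/-- If `A` is a normal RS-subgroup of a finite nilpotent group `G`, then every prime
dividing the order of `A` belongs to `{2, 3}`. -/
theorem primes_of_rsSubgroup_nilpotent {G : Type*} [Group G] [Finite G]
    [Group.IsNilpotent G] (A : Subgroup G) [A.Normal] (hA : IsRSSubgroup A) :
    ∀ q : ℕ, q.Prime → q ∣ Nat.card A → q ∈ ({2, 3} : Set ℕ) := by
  intro q hq hdvd
  by_contra hq23
  have h2 : q ≠ 2 := fun h => hq23 (by simp [h])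
  have h3 : q ≠ 3 := fun h => hq23 (by simp [h])
  have : Fact q.Prime := ⟨hq⟩
  obtain ⟨⟨x, hxA⟩, hx⟩ := exists_prime_orderOf_dvd_card' (G := A) q hdvd
  rw [Subgroup.orderOf_mk] at hx
  have hc2 : Nat.Coprime 2 q := (Nat.coprime_primes Nat.prime_two hq).2 (Ne.symm h2)
  have hc3 : Nat.Coprime 3 q := (Nat.coprime_primes Nat.prime_three hq).2 (Ne.symm h3)
  have hxq : x ^ q = 1 := by rw [← hx]; exact pow_orderOf_eq_one x
  have key := hA x hxA (isOfFinOrder_of_finite x) 2 (by norm_num) (by rw [hx]; exact hc2)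
  have step : ∀ n, x ∈ Subgroup.upperCentralSeries G (n + 1) →
      x ∈ Subgroup.upperCentralSeries G n := by
    intro n hn
    have hn2 := Subgroup.mem_upperCentralSeries_succ_iff.1 (Subgroup.pow_mem _ hn 2)
    rcases key with h | h
    · obtain ⟨c, hc⟩ := isConj_iff.1 h
      have h1 := hn2 c
      have e : x ^ 2 * c * (x ^ 2)⁻¹ * c⁻¹ = x := by
        calc x ^ 2 * c * (x ^ 2)⁻¹ * c⁻¹ = x ^ 2 * (c * x ^ 2 * c⁻¹)⁻¹ := by group
          _ = x := by rw [hc]; group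
      rwa [commutatorElement_def, e] at h1
    · obtain ⟨c, hc⟩ := isConj_iff.1 h
      have h1 := hn2 c
      have e : x ^ 2 * c * (x ^ 2)⁻¹ * c⁻¹ = x ^ 3 := by
        calc x ^ 2 * c * (x ^ 2)⁻¹ * c⁻¹ = x ^ 2 * (c * x ^ 2 * c⁻¹)⁻¹ := by group
          _ = x ^ 3 := by rw [hc]; group
      rw [commutatorElement_def, e] at h1
      have hb := Nat.gcd_eq_gcd_ab 3 q
      rw [hc3.gcd_eq_one] at hb
      have hx1 : x = (x ^ 3) ^ (Nat.gcdA 3 q) := by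
        calc x = x ^ (((1 : ℕ) : ℤ)) := by simp
          _ = (x ^ 3) ^ (Nat.gcdA 3 q) := by
            rw [hb, zpow_add, zpow_mul, zpow_mul, zpow_natCast, zpow_natCast, hxq]
            simp
      rw [hx1]
      exact Subgroup.zpow_mem _ h1 _
  have all : ∀ n, x ∈ Subgroup.upperCentralSeries G n → x = 1 := by
    intro n
    induction n with
    | zero => intro h; simpa [Subgroup.upperCentralSeries_zero] using h
    | succ n ih => intro h; exact ih (step n h)
  obtain ⟨n, hn⟩ := Group.IsNilpotent.nilpotent G
  have : x = 1 := all n (by rw [hn]; trivial)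
  rw [this, orderOf_one] at hx
  exact hq.one_lt.ne hx
end
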